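/- arXiv:1908.05198 — 5 statements merged into one kernel-verified Lean document; each statement's English description precedes it below -/
import Mathlib

section
/- There exist absolute constants c, C > 0 such that the following holds. For all n, B, k ∈ ℕ with k ≥ 2 and k·B ≤ n, for truly random independent hash functions h_1,...,h_k : {1,...,n} → {1,...,B}, and for every i ∈ {1,...,n}, the Count-Min estimate f̃_i of the Zipfian frequency f_i = 1/i satisfies c·log(n/B)/B ≤ E[f̃_i − f_i] ≤ C·log(n/B)/B. -/
/-- Expectation of a real-valued random variable on a finite probability space
with the uniform distribution. -/
noncomputable def expUnif {Ω : Type*} [Fintype Ω] (X : Ω → ℝ) : ℝ :=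
  (∑ ω : Ω, X ω) / (Fintype.card Ω : ℝ)

/-- Zipfian frequency of the item indexed by `i : Fin n` (representing item `i+1`):
`f_{i+1} = 1/(i+1)`. -/
noncomputable def zipf {n : ℕ} (i : Fin n) : ℝ := ((i : ℝ) + 1)⁻¹

/-- The Count-Min estimate of item `i` given the `k` hash functions `h`:
the minimum over the rows of the total frequency hashing to item `i`'s bucket. -/
noncomputable def cmEst {n B k : ℕ} (f : Fin n → ℝ) (h : Fin k → Fin n → Fin B)
    (i : Fin n) : ℝ :=
  ⨅ ℓ : Fin k, ∑ j : Fin n, if h ℓ j = h ℓ i then f j else 0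

/-!
The error on item `i` is the minimum of `k` independent copies of the weight `X` of the other items
colliding with `i` in one row.

For the upper bound, split `X` at rank `B`. The items of rank beyond `B` have expected colliding
weight at most `log (n / B) / B`. Two independent copies of the part of rank at most `B` have a
minimum that is at most the product of their square roots, and since `√` is subadditive the
expectation of that product is at most `(B⁻¹ * ∑ j ≤ B, j ^ (-1/2)) ^ 2 ≤ 4 / B`.

For the lower bound, `exp (-t * min) ≤ ∑ exp (-t * X)` over the rows, so Jensen's inequality gives
`exp (-t * E[min]) ≤ k * E[exp (-t * X)]`. At `t = 10 * B` the Laplace transform on the right is at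
most `(n / B) ^ (-10 / 9)`, which beats the union bound factor `k ≤ n / B` by a power of `n / B`.
-/

namespace CountMin

open Finset
open scoped BigOperators

section UniformExpectation

theorem expUnif_eq_expect {Ω : Type*} [Fintype Ω] (X : Ω → ℝ) : expUnif X = 𝔼 ω, X ω :=
  (Fintype.expect_eq_sum_div_card X).symm

theorem map_expect_le_of_convexOn {α : Type*} {s : Finset α} (hs : s.Nonempty) {D : Set ℝ}
    {φ : ℝ → ℝ} (hφ : ConvexOn ℝ D φ) {X : α → ℝ} (hX : ∀ a ∈ s, X a ∈ D) :
    φ (𝔼 a ∈ s, X a) ≤ 𝔼 a ∈ s, φ (X a) := by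
  have hcard : (#s : ℝ) ≠ 0 := by exact_mod_cast hs.card_ne_zero
  have hweights : ∑ _a ∈ s, (#s : ℝ)⁻¹ = 1 := by simp [hcard]
  have hjensen := hφ.map_sum_le (fun _ _ ↦ by positivity) hweights hX
  simpa only [expect_eq_sum_div_card, smul_eq_mul, sum_div, inv_mul_eq_div] using hjensen

theorem expect_ite_eq_add_sub_div {β K : Type*} [Fintype β] [DecidableEq β] [Field K] [CharZero K]
    (b : β) (x y : K) :
    (𝔼 c, if c = b then x else y) = y + (x - y) / Fintype.card β := by
  have : Nonempty β := ⟨b⟩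
  have hsplit (c : β) : (if c = b then x else y) = y + if c = b then x - y else 0 := by
    split_ifs <;> simp
  simp [hsplit, expect_add_distrib, Fintype.expect_eq_sum_div_card (fun c ↦ ite (c = b) _ _)]

variable {ι K : Type*} [Fintype ι] [DecidableEq ι] [Semifield K] [CharZero K]

theorem expect_prod_eval {β : ι → Type*} [∀ l, Fintype (β l)] (F : ∀ l, β l → K) :
    𝔼 h : ∀ l, β l, ∏ l, F l (h l) = ∏ l, 𝔼 b, F l b := by
  simp only [Fintype.expect_eq_sum_div_card, prod_div_distrib, Fintype.prod_sum,
    Fintype.card_pi, Nat.cast_prod]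

variable {β : Type*} [Fintype β] [Nonempty β]

theorem expect_prod_mem_eval (s : Finset ι) (F : ι → β → K) :
    𝔼 h : ι → β, ∏ l ∈ s, F l (h l) = ∏ l ∈ s, 𝔼 b, F l b := by
  have hextend := expect_prod_eval fun l (b : β) ↦ if l ∈ s then F l b else 1
  have hone (l : ι) : (𝔼 b : β, if l ∈ s then F l b else 1) = if l ∈ s then 𝔼 b, F l b else 1 := by
    split_ifs <;> simp
  simpa only [hone, Fintype.prod_ite_mem] using hextend

theorem expect_eval (l : ι) (F : β → K) : 𝔼 h : ι → β, F (h l) = 𝔼 b, F b := by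
  simpa using expect_prod_mem_eval {l} fun _ ↦ F

theorem expect_eval_mul_eval {l m : ι} (hlm : l ≠ m) (F : β → K) :
    𝔼 h : ι → β, F (h l) * F (h m) = (𝔼 b, F b) ^ 2 := by
  simpa [prod_pair hlm, sq] using expect_prod_mem_eval {l, m} fun _ ↦ F

end UniformExpectation

section MinimumOfIndependentCopies

variable {κ Ω : Type*} [Fintype κ] [DecidableEq κ] [Fintype Ω] [Nonempty Ω]

theorem exp_neg_mul_expect_iInf_le [Nonempty κ] (t : ℝ) (X : Ω → ℝ) :
    Real.exp (-(t * 𝔼 h : κ → Ω, ⨅ l, X (h l))) ≤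
      Fintype.card κ * 𝔼 g, Real.exp (-(t * X g)) := by
  have hunion (h : κ → Ω) :
      Real.exp (-(t * ⨅ l, X (h l))) ≤ ∑ l, Real.exp (-(t * X (h l))) := by
    obtain ⟨l, hl⟩ := exists_eq_ciInf_of_finite (f := fun l ↦ X (h l))
    rw [← hl]
    exact single_le_sum (f := fun l ↦ Real.exp (-(t * X (h l))))
      (fun _ _ ↦ (Real.exp_pos _).le) (mem_univ l)
  calc Real.exp (-(t * 𝔼 h : κ → Ω, ⨅ l, X (h l)))
      = Real.exp (𝔼 h : κ → Ω, -(t * ⨅ l, X (h l))) := by rw [expect_neg_distrib, mul_expect]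
    _ ≤ 𝔼 h : κ → Ω, Real.exp (-(t * ⨅ l, X (h l))) :=
      map_expect_le_of_convexOn univ_nonempty convexOn_exp fun _ _ ↦ Set.mem_univ _
    _ ≤ 𝔼 h : κ → Ω, ∑ l, Real.exp (-(t * X (h l))) := expect_le_expect fun h _ ↦ hunion h
    _ = Fintype.card κ * 𝔼 g, Real.exp (-(t * X g)) := by
      simp [expect_sum_comm, expect_eval _ fun g ↦ Real.exp (-(t * X g))]

theorem min_add_le_sqrt_mul_sqrt_add {a b c d : ℝ} (ha : 0 ≤ a) (hb : 0 ≤ b) (hc : 0 ≤ c)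
    (hd : 0 ≤ d) : min (a + b) (c + d) ≤ √a * √c + (b + d) := by
  rcases le_total a c with hac | hca
  · have : a ≤ √a * √c := by
      simpa [Real.mul_self_sqrt ha] using
        mul_le_mul_of_nonneg_left (Real.sqrt_le_sqrt hac) a.sqrt_nonneg
    exact min_le_of_left_le (by linarith)
  · have : c ≤ √a * √c := by
      simpa [Real.mul_self_sqrt hc] using
        mul_le_mul_of_nonneg_right (Real.sqrt_le_sqrt hca) c.sqrt_nonneg
    exact min_le_of_right_le (by linarith)

theorem expect_iInf_add_le [Nontrivial κ] {Y Z : Ω → ℝ} (hY : 0 ≤ Y) (hZ : 0 ≤ Z) :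
    𝔼 h : κ → Ω, ⨅ l, (Y (h l) + Z (h l)) ≤ (𝔼 g, √(Y g)) ^ 2 + 2 * 𝔼 g, Z g := by
  obtain ⟨l, m, hlm⟩ := exists_pair_ne κ
  have hpair (h : κ → Ω) :
      ⨅ l, (Y (h l) + Z (h l)) ≤ √(Y (h l)) * √(Y (h m)) + (Z (h l) + Z (h m)) :=
    (le_min (ciInf_le (Set.finite_range _).bddBelow l)
      (ciInf_le (Set.finite_range _).bddBelow m)).trans
      (min_add_le_sqrt_mul_sqrt_add (hY _) (hZ _) (hY _) (hZ _))
  calc 𝔼 h : κ → Ω, ⨅ l, (Y (h l) + Z (h l))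
      ≤ 𝔼 h : κ → Ω, (√(Y (h l)) * √(Y (h m)) + (Z (h l) + Z (h m))) :=
        expect_le_expect fun h _ ↦ hpair h
    _ = (𝔼 g, √(Y g)) ^ 2 + 2 * 𝔼 g, Z g := by
        rw [expect_add_distrib, expect_add_distrib, expect_eval_mul_eval hlm fun g ↦ √(Y g),
          expect_eval l, expect_eval m, two_mul]

end MinimumOfIndependentCopies

section CollidingMass

variable {ι β : Type*} [DecidableEq β]

/-- The total weight `∑ f j` of the items `j ∈ s` that the hash function `g` puts in the bucket
of `i`. For `s = univ.erase i` this is the error that one row of a Count-Min sketch makes on `i`. -/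
def collidingMass (f : ι → ℝ) (s : Finset ι) (i : ι) (g : ι → β) : ℝ :=
  ∑ j ∈ s with g j = g i, f j

theorem collidingMass_nonneg {f : ι → ℝ} (hf : 0 ≤ f) (s : Finset ι) (i : ι) (g : ι → β) :
    0 ≤ collidingMass f s i g :=
  sum_nonneg fun j _ ↦ hf j

theorem mul_collidingMass (t : ℝ) (f : ι → ℝ) (s : Finset ι) (i : ι) (g : ι → β) :
    t * collidingMass f s i g = collidingMass (fun j ↦ t * f j) s i g :=
  mul_sum _ _ _

theorem collidingMass_add_sdiff [DecidableEq ι] (f : ι → ℝ) {s t : Finset ι} (hst : s ⊆ t)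
    (i : ι) (g : ι → β) :
    collidingMass f s i g + collidingMass f (t \ s) i g = collidingMass f t i g := by
  simp only [collidingMass, sum_filter]
  rw [add_comm, sum_sdiff hst]

theorem sqrt_sum_le_sum_sqrt (s : Finset ι) {f : ι → ℝ} (hf : ∀ j ∈ s, 0 ≤ f j) :
    √(∑ j ∈ s, f j) ≤ ∑ j ∈ s, √(f j) := by
  refine le_sum_of_subadditive_on_pred (√·) (0 ≤ ·) Real.sqrt_zero.le (fun x y hx hy ↦ ?_)
    (fun _ _ ↦ add_nonneg) f hf
  rw [Real.sqrt_le_left (by positivity), add_sq, Real.sq_sqrt hx, Real.sq_sqrt hy]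
  have : 0 ≤ √x * √y := by positivity
  linarith

theorem sqrt_collidingMass_le {f : ι → ℝ} (hf : 0 ≤ f) (s : Finset ι) (i : ι) (g : ι → β) :
    √(collidingMass f s i g) ≤ collidingMass (fun j ↦ √(f j)) s i g :=
  sqrt_sum_le_sum_sqrt _ fun j _ ↦ hf j

variable [Fintype ι] [DecidableEq ι] [Fintype β] [Nonempty β]

theorem expect_prod_ite_collision {K : Type*} [Field K] [CharZero K] {i : ι} {s : Finset ι}
    (hi : i ∉ s) (u v : ι → K) :
    (𝔼 g : ι → β, ∏ j ∈ s, if g j = g i then u j else v j) =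
      ∏ j ∈ s, (v j + (u j - v j) / Fintype.card β) := by
  -- Once the bucket `b` of `i` is fixed, the factors depend on different values of `g`.
  let F (b : β) (j : ι) (c : β) : K :=
    if j = i then if c = b then 1 else 0 else if c = b then u j else v j
  have hne {j : ι} (hj : j ∈ s) : j ≠ i := ne_of_mem_of_not_mem hj hi
  have hbucket (g : ι → β) :
      (∏ j ∈ s, if g j = g i then u j else v j) = ∑ b, ∏ j ∈ insert i s, F b j (g j) := by
    have hF (b : β) : ∏ j ∈ insert i s, F b j (g j) =
        if g i = b then ∏ j ∈ s, (if g j = b then u j else v j) else 0 := by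
      rw [prod_insert hi, prod_congr rfl fun j hj ↦ if_neg (hne hj)]
      simp [F]
    simp [hF]
  have hexpect (b : β) : 𝔼 g : ι → β, ∏ j ∈ insert i s, F b j (g j) =
      (Fintype.card β : K)⁻¹ * ∏ j ∈ s, (v j + (u j - v j) / Fintype.card β) := by
    rw [expect_prod_mem_eval, prod_insert hi]
    congr 1
    · simp [F]
    · refine prod_congr rfl fun j hj ↦ ?_
      simp only [F, if_neg (hne hj), expect_ite_eq_add_sub_div]
  simp only [hbucket, expect_sum_comm, hexpect]
  simp

theorem expect_collidingMass {i : ι} {s : Finset ι} (hi : i ∉ s) (f : ι → ℝ) :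
    𝔼 g : ι → β, collidingMass f s i g = (∑ j ∈ s, f j) / Fintype.card β := by
  simp only [collidingMass, sum_filter, expect_sum_comm, sum_div]
  refine sum_congr rfl fun j hj ↦ ?_
  have hij : i ∉ ({j} : Finset ι) := by simpa using (ne_of_mem_of_not_mem hj hi).symm
  simpa using expect_prod_ite_collision (β := β) hij f 0

theorem one_add_exp_neg_sub_one_div_le_exp {x B : ℝ} (hx : 0 ≤ x) (hB : 0 ≤ B) :
    1 + (Real.exp (-x) - 1) / B ≤ Real.exp (-(x / (1 + x) / B)) := by
  have hexp : Real.exp (-x) ≤ (1 + x)⁻¹ := by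
    rw [Real.exp_neg]
    exact inv_anti₀ (by positivity) (by linarith [Real.add_one_le_exp x])
  have hsub : Real.exp (-x) - 1 ≤ -(x / (1 + x)) := by
    have : (1 + x)⁻¹ - 1 = -(x / (1 + x)) := by field_simp; ring
    linarith
  calc 1 + (Real.exp (-x) - 1) / B ≤ -(x / (1 + x) / B) + 1 := by
        rw [add_comm, ← neg_div]
        gcongr
    _ ≤ Real.exp (-(x / (1 + x) / B)) := Real.add_one_le_exp _

theorem expect_exp_neg_collidingMass_le {i : ι} {s : Finset ι} (hi : i ∉ s) {f : ι → ℝ}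
    (hf : 0 ≤ f) :
    𝔼 g : ι → β, Real.exp (-collidingMass f s i g) ≤
      Real.exp (-((∑ j ∈ s, f j / (1 + f j)) / Fintype.card β)) := by
  have hprod (g : ι → β) : Real.exp (-collidingMass f s i g) =
      ∏ j ∈ s, if g j = g i then Real.exp (-f j) else 1 := by
    rw [collidingMass, ← sum_neg_distrib, Real.exp_sum, prod_filter]
  have hfactor_nonneg (j : ι) : 0 ≤ 1 + (Real.exp (-f j) - 1) / Fintype.card β := by
    have hcard : (Fintype.card β : ℝ)⁻¹ ≤ 1 := Nat.cast_inv_le_one _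
    have : 0 ≤ Real.exp (-f j) / Fintype.card β := by positivity
    rw [sub_div, one_div]
    linarith
  simp only [hprod, expect_prod_ite_collision hi]
  rw [sum_div, ← sum_neg_distrib, Real.exp_sum]
  exact prod_le_prod (fun j _ ↦ hfactor_nonneg j)
    fun j _ ↦ one_add_exp_neg_sub_one_div_le_exp (hf j) (Nat.cast_nonneg _)

end CollidingMass

section Estimate

variable {n B k : ℕ}

theorem cmEst_sub_eq_iInf [NeZero k] (f : Fin n → ℝ) (h : Fin k → Fin n → Fin B) (i : Fin n) :
    cmEst f h i - f i = ⨅ l, collidingMass f (univ.erase i) i (h l) := by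
  rw [cmEst, ciInf_sub (Set.finite_range _).bddBelow]
  refine iInf_congr fun l ↦ ?_
  rw [collidingMass, sum_filter, ← add_sum_erase univ _ (mem_univ i)]
  simp

theorem expUnif_cmEst_sub_le [NeZero B] (hk : 2 ≤ k) {f : Fin n → ℝ} (hf : 0 ≤ f) (i : Fin n)
    (H : Finset (Fin n)) :
    expUnif (fun h : Fin k → Fin n → Fin B ↦ cmEst f h i - f i) ≤
      ((∑ j ∈ H, √(f j)) / B) ^ 2 + 2 * ((∑ j ∈ Hᶜ, f j) / B) := by
  have : NeZero k := ⟨by omega⟩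
  have : Nontrivial (Fin k) := Fin.nontrivial_iff_two_le.2 hk
  have hsplit (g : Fin n → Fin B) : collidingMass f (univ.erase i) i g =
      collidingMass f (H.erase i) i g + collidingMass f (Hᶜ.erase i) i g := by
    rw [← collidingMass_add_sdiff f (erase_subset_erase i (subset_univ H)), ← erase_sdiff_distrib,
      compl_eq_univ_sdiff]
  have hheavy : 𝔼 g : Fin n → Fin B, √(collidingMass f (H.erase i) i g) ≤
      (∑ j ∈ H, √(f j)) / B :=
    calc 𝔼 g : Fin n → Fin B, √(collidingMass f (H.erase i) i g)
        ≤ 𝔼 g : Fin n → Fin B, collidingMass (fun j ↦ √(f j)) (H.erase i) i g :=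
          expect_le_expect fun g _ ↦ sqrt_collidingMass_le hf _ _ g
      _ = (∑ j ∈ H.erase i, √(f j)) / B := by
          rw [expect_collidingMass (notMem_erase i H), Fintype.card_fin]
      _ ≤ (∑ j ∈ H, √(f j)) / B := by
          gcongr
          exact erase_subset i H
  have hlight : 𝔼 g : Fin n → Fin B, collidingMass f (Hᶜ.erase i) i g ≤ (∑ j ∈ Hᶜ, f j) / B := by
    rw [expect_collidingMass (notMem_erase i _), Fintype.card_fin]
    gcongr
    exacts [fun j _ _ ↦ hf j, erase_subset i _]
  simp only [expUnif_eq_expect, cmEst_sub_eq_iInf, hsplit]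
  refine (expect_iInf_add_le (collidingMass_nonneg hf _ _) (collidingMass_nonneg hf _ _)).trans ?_
  gcongr

theorem exp_neg_mul_expUnif_cmEst_sub_le [NeZero B] [NeZero k] {f : Fin n → ℝ} (hf : 0 ≤ f)
    (i : Fin n) {t : ℝ} (ht : 0 ≤ t) :
    Real.exp (-(t * expUnif (fun h : Fin k → Fin n → Fin B ↦ cmEst f h i - f i))) ≤
      k * Real.exp (-((∑ j ∈ univ.erase i, t * f j / (1 + t * f j)) / B)) := by
  simp only [expUnif_eq_expect, cmEst_sub_eq_iInf]
  refine (exp_neg_mul_expect_iInf_le t _).trans ?_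
  simp only [mul_collidingMass, Fintype.card_fin]
  gcongr
  simpa using expect_exp_neg_collidingMass_le (β := Fin B) (notMem_erase i univ)
    fun j ↦ mul_nonneg ht (hf j)

end Estimate

section Zipf

theorem zipf_nonneg {n : ℕ} : 0 ≤ (zipf : Fin n → ℝ) := fun j ↦ by
  rw [Pi.zero_apply, zipf]
  positivity

theorem log_le_sum_range_inv {a : ℝ} (ha : 0 < a) (m : ℕ) :
    Real.log ((a + m) / a) ≤ ∑ j ∈ range m, (a + j)⁻¹ := by
  rw [← integral_inv_of_pos ha (by positivity)]
  exact (inv_antitoneOn_Icc_right ha).integral_le_sum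

theorem sum_range_sqrt_inv_le (m : ℕ) : ∑ j ∈ range m, √((j + 1 : ℝ)⁻¹) ≤ 2 * √m := by
  have hstep (j : ℕ) : √((j + 1 : ℝ)⁻¹) ≤ 2 * √((j + 1 : ℕ) : ℝ) - 2 * √(j : ℝ) := by
    have hpos : 0 < √(j + 1 : ℝ) := by positivity
    rw [Nat.cast_succ, Real.sqrt_inv, inv_le_iff_one_le_mul₀ hpos]
    nlinarith [sq_nonneg (√(j + 1 : ℝ) - √(j : ℝ)), Real.sq_sqrt (j.cast_nonneg (α := ℝ)),
      Real.sq_sqrt (j.cast_add_one_pos (α := ℝ)).le]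
  calc ∑ j ∈ range m, √((j + 1 : ℝ)⁻¹)
      ≤ ∑ j ∈ range m, (2 * √((j + 1 : ℕ) : ℝ) - 2 * √(j : ℝ)) := sum_le_sum fun j _ ↦ hstep j
    _ = 2 * √m := by rw [sum_range_sub fun j : ℕ ↦ 2 * √(j : ℝ)]; simp

variable {n B k : ℕ}

/-- The `B` most frequent items of a Zipfian input, those of index `j < B`, hence of rank
`j + 1 ≤ B`. They are split off in the upper bound because their total weight, of order `log B`,
would be too large if all of it were charged to each row. -/
def heavyItems (n B : ℕ) : Finset (Fin n) := {j | (j : ℕ) < B}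

theorem sum_fin_filter_eq_sum_range {M : Type*} [AddCommMonoid M] (p : ℕ → Prop) [DecidablePred p]
    (φ : ℕ → M) : ∑ j ∈ {j : Fin n | p j}, φ j = ∑ j ∈ range n with p j, φ j := by
  rw [sum_filter, sum_filter, Fin.sum_univ_eq_sum_range fun j ↦ if p j then φ j else 0]

theorem sum_heavyItems_sqrt_zipf_le : ∑ j ∈ heavyItems n B, √(zipf j) ≤ 2 * √B :=
  calc ∑ j ∈ heavyItems n B, √(zipf j)
      = ∑ j ∈ range n with j < B, √((j + 1 : ℝ)⁻¹) :=
        sum_fin_filter_eq_sum_range (· < B) fun j ↦ √((j + 1 : ℝ)⁻¹)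
    _ ≤ ∑ j ∈ range B, √((j + 1 : ℝ)⁻¹) :=
        sum_le_sum_of_subset_of_nonneg (fun _ hj ↦ mem_range.2 (mem_filter.1 hj).2)
          fun _ _ _ ↦ Real.sqrt_nonneg _
    _ ≤ 2 * √B := sum_range_sqrt_inv_le B

theorem sum_compl_heavyItems_zipf_le [NeZero B] (hBn : B ≤ n) :
    ∑ j ∈ (heavyItems n B)ᶜ, zipf j ≤ Real.log (n / B) := by
  have hB : (0 : ℝ) < B := by exact_mod_cast NeZero.pos B
  have hrange : {j ∈ range n | ¬j < B} = Ico B n := by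
    ext j
    simp [and_comm]
  calc ∑ j ∈ (heavyItems n B)ᶜ, zipf j
      = ∑ j ∈ Ico B n, (j + 1 : ℝ)⁻¹ := by
        rw [heavyItems, compl_filter, ← hrange]
        exact sum_fin_filter_eq_sum_range (¬· < B) fun j ↦ (j + 1 : ℝ)⁻¹
    _ ≤ ∫ x in (B : ℝ)..n, x⁻¹ :=
        mod_cast (inv_antitoneOn_Icc_right hB).sum_le_integral_Ico hBn
    _ = Real.log (n / B) := integral_inv_of_pos hB (hB.trans_le (by exact_mod_cast hBn))

theorem sum_succ_le_sum_univ_erase {M : Type*} [AddCommGroup M] [PartialOrder M]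
    [IsOrderedAddMonoid M] {m : ℕ} {φ : Fin (m + 1) → M} (hφ : Antitone φ) (i : Fin (m + 1)) :
    ∑ j : Fin m, φ j.succ ≤ ∑ j ∈ univ.erase i, φ j := by
  rw [← add_le_add_iff_left (φ i), add_sum_erase _ _ (mem_univ i), Fin.sum_univ_succ]
  exact add_le_add_left (hφ (Fin.zero_le i)) _

theorem mul_log_le_sum_erase_zipf {t : ℝ} (ht : 0 ≤ t) (i : Fin n) :
    t * Real.log ((t + 1 + n) / (t + 2)) ≤
      ∑ j ∈ univ.erase i, t * zipf j / (1 + t * zipf j) := by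
  obtain ⟨m, rfl⟩ : ∃ m, n = m + 1 := Nat.exists_eq_succ_of_ne_zero i.pos.ne'
  have hterm (j : Fin (m + 1)) : t * zipf j / (1 + t * zipf j) = t * (t + 1 + j)⁻¹ := by
    rw [zipf]
    field_simp
    ring
  have hanti : Antitone fun j : Fin (m + 1) ↦ (t + 1 + j)⁻¹ := fun j l hjl ↦ by
    have : (j : ℕ) ≤ l := hjl
    dsimp only
    gcongr
  simp only [hterm, ← mul_sum]
  gcongr
  calc Real.log ((t + 1 + (m + 1 : ℕ)) / (t + 2))
      = Real.log ((t + 2 + m) / (t + 2)) := by push_cast; ring_nf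
    _ ≤ ∑ j ∈ range m, (t + 2 + j)⁻¹ := log_le_sum_range_inv (by positivity) m
    _ = ∑ j : Fin m, (t + 1 + j.succ)⁻¹ := by
        rw [← Fin.sum_univ_eq_sum_range fun j ↦ (t + 2 + j)⁻¹]
        refine sum_congr rfl fun j _ ↦ ?_
        rw [Fin.val_succ, Nat.cast_succ]
        ring
    _ ≤ ∑ j ∈ univ.erase i, (t + 1 + j)⁻¹ := sum_succ_le_sum_univ_erase hanti i

theorem log_le_nine_mul_log {r : ℝ} (hr : 2 ≤ r) :
    Real.log r ≤ 9 * Real.log ((r + 11) / 12) := by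
  obtain ⟨u, rfl⟩ : ∃ u, r = 1 + 12 * u := ⟨(r - 1) / 12, by ring⟩
  have hu : 1 / 12 ≤ u := by linarith
  have hbinomial : 1 + 9 * u + 36 * u ^ 2 ≤ (1 + u) ^ 9 := by
    have : 0 ≤ u ^ 3 *
        (84 + 126 * u + 126 * u ^ 2 + 84 * u ^ 3 + 36 * u ^ 4 + 9 * u ^ 5 + u ^ 6) := by
      positivity
    linarith
  have hquadratic : 3 * u ≤ 36 * u ^ 2 := by nlinarith
  calc Real.log (1 + 12 * u) ≤ Real.log ((1 + u) ^ 9) := by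
        gcongr
        linarith
    _ = 9 * Real.log ((1 + 12 * u + 11) / 12) := by
        rw [Real.log_pow]
        ring_nf

theorem log_le_sum_erase_zipf_div [NeZero B] (hn : 2 * B ≤ n) (i : Fin n) :
    10 / 9 * Real.log (n / B) ≤
      (∑ j ∈ univ.erase i, 10 * B * zipf j / (1 + 10 * B * zipf j)) / B := by
  have hB : (1 : ℝ) ≤ B := by exact_mod_cast NeZero.pos B
  have hr : 2 ≤ (n / B : ℝ) := by
    rw [le_div_iff₀ (by positivity)]
    exact_mod_cast hn
  have hratio : (n / B + 11 : ℝ) / 12 ≤ (10 * B + 1 + n) / (10 * B + 2) := by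
    have hrn : (n / B : ℝ) ≤ n := div_le_self n.cast_nonneg hB
    have hrB : (n / B : ℝ) * B = n := div_mul_cancel₀ _ (by positivity)
    rw [div_le_div_iff₀ (by norm_num) (by positivity)]
    linarith
  rw [le_div_iff₀ (by positivity)]
  calc 10 / 9 * Real.log (n / B) * B
      ≤ 10 / 9 * (9 * Real.log ((n / B + 11) / 12)) * B := by
        gcongr
        exact log_le_nine_mul_log hr
    _ = 10 * B * Real.log ((n / B + 11) / 12) := by ring
    _ ≤ 10 * B * Real.log ((10 * B + 1 + n) / (10 * B + 2)) := by gcongr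
    _ ≤ _ := mul_log_le_sum_erase_zipf (by positivity) i

theorem expUnif_cmEst_zipf_sub_le [NeZero B] (hk : 2 ≤ k) (hn : 2 * B ≤ n) (i : Fin n) :
    expUnif (fun h : Fin k → Fin n → Fin B ↦ cmEst zipf h i - zipf i) ≤
      8 * Real.log (n / B) / B := by
  have hB : (0 : ℝ) < B := by exact_mod_cast NeZero.pos B
  have hlog : 2 / 3 ≤ Real.log (n / B) :=
    calc (2 / 3 : ℝ) ≤ Real.log 2 := by linarith [Real.log_two_gt_d9]
      _ ≤ Real.log (n / B) := by
        gcongr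
        rw [le_div_iff₀ hB]
        exact_mod_cast hn
  calc expUnif (fun h : Fin k → Fin n → Fin B ↦ cmEst zipf h i - zipf i)
      ≤ ((∑ j ∈ heavyItems n B, √(zipf j)) / B) ^ 2 +
          2 * ((∑ j ∈ (heavyItems n B)ᶜ, zipf j) / B) :=
        expUnif_cmEst_sub_le hk zipf_nonneg i _
    _ ≤ (2 * √B / B) ^ 2 + 2 * (Real.log (n / B) / B) := by
        gcongr
        exacts [sum_heavyItems_sqrt_zipf_le, sum_compl_heavyItems_zipf_le (by omega)]
    _ = (4 + 2 * Real.log (n / B)) / B := by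
        rw [div_pow, mul_pow, Real.sq_sqrt hB.le]
        field_simp
        ring
    _ ≤ 8 * Real.log (n / B) / B := by
        gcongr
        linarith

theorem le_expUnif_cmEst_zipf_sub [NeZero B] [NeZero k] (hn : 2 * B ≤ n) (hkn : k * B ≤ n)
    (i : Fin n) :
    1 / 90 * Real.log (n / B) / B ≤
      expUnif (fun h : Fin k → Fin n → Fin B ↦ cmEst zipf h i - zipf i) := by
  have hB : (0 : ℝ) < B := by exact_mod_cast NeZero.pos B
  have hk : (0 : ℝ) < k := by exact_mod_cast NeZero.pos k
  set E := expUnif (fun h : Fin k → Fin n → Fin B ↦ cmEst zipf h i - zipf i)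
  set L := Real.log (n / B)
  have hkL : (k : ℝ) ≤ Real.exp L := by
    have hkr : (k : ℝ) ≤ n / B := by
      rw [le_div_iff₀ hB]
      exact_mod_cast hkn
    rwa [Real.exp_log (hk.trans_le hkr)]
  have hexp : Real.exp (-(10 * B * E)) ≤ Real.exp (-(L / 9)) :=
    calc Real.exp (-(10 * B * E))
        ≤ k * Real.exp (-((∑ j ∈ univ.erase i, 10 * B * zipf j / (1 + 10 * B * zipf j)) / B)) :=
          exp_neg_mul_expUnif_cmEst_sub_le zipf_nonneg i (by positivity)
      _ ≤ Real.exp L * Real.exp (-(10 / 9 * L)) := by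
          gcongr
          exact log_le_sum_erase_zipf_div hn i
      _ = Real.exp (-(L / 9)) := by
          rw [← Real.exp_add]
          ring_nf
  rw [div_le_iff₀ hB]
  linarith [Real.exp_le_exp.1 hexp]

end Zipf

end CountMin

/-- tight bounds `Θ(log(n/B)/B)` for the expected error of Count-Min
with `k ≥ 2` truly random hash functions into `B` buckets, on Zipfian input. -/
theorem countMin_zipfian_tight :
    ∃ c C : ℝ, 0 < c ∧ 0 < C ∧
      ∀ n B k : ℕ, 2 ≤ k → 1 ≤ B → k * B ≤ n → ∀ i : Fin n,
        c * Real.log ((n : ℝ) / (B : ℝ)) / (B : ℝ) ≤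
            expUnif (fun h : Fin k → Fin n → Fin B => cmEst zipf h i - zipf i) ∧
        expUnif (fun h : Fin k → Fin n → Fin B => cmEst zipf h i - zipf i) ≤
            C * Real.log ((n : ℝ) / (B : ℝ)) / (B : ℝ) := by
  refine ⟨1 / 90, 8, by norm_num, by norm_num, fun n B k hk hB hkn i ↦ ?_⟩
  have : NeZero B := ⟨by omega⟩
  have : NeZero k := ⟨by omega⟩
  have hn : 2 * B ≤ n := (Nat.mul_le_mul_right B hk).trans hkn
  exact ⟨CountMin.le_expUnif_cmEst_zipf_sub hn hkn i, CountMin.expUnif_cmEst_zipf_sub_le hk hn i⟩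
end

section
/- There exists an absolute constant C > 0 such that the following holds. For all n ∈ ℕ and all k ≥ 2, for truly random independent hash functions h_1,...,h_k : {1,...,n} → {1,...,n} (i.e., the number of buckets equals the number of items, B = n), and for every i ∈ {1,...,n}, the Count-Min estimate f̃_i of the Zipfian frequency f_i = 1/i satisfies E[f̃_i − f_i] ≤ C/n. -/
/-!
The error of a single row is the total frequency of the items colliding with `i`; its mean is of
order `log n / n`, so one row is not enough. The minimum of two rows is at most the geometric mean
of their errors, and distinct rows are independent, so the expected error is at most the square of
`E √(row error)`. Since `√` is subadditive and each item collides with `i` with probability `1 / B`,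
`E √(row error) ≤ (∑ j, √(f j)) / B`. For Zipfian frequencies this is at most `2 √n / B`, whose
square is `4 / n` when `B = n`.
-/

section Expectation

variable {Ω ι : Type*} [Fintype Ω]

lemma expUnif_const [Nonempty Ω] (c : ℝ) : expUnif (fun _ : Ω => c) = c := by
  simp [expUnif]

lemma expUnif_const_mul (c : ℝ) (X : Ω → ℝ) : expUnif (fun ω => c * X ω) = c * expUnif X := by
  simp only [expUnif, ← Finset.mul_sum, mul_div_assoc]

lemma expUnif_nonneg {X : Ω → ℝ} (hX : ∀ ω, 0 ≤ X ω) : 0 ≤ expUnif X :=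
  div_nonneg (Finset.sum_nonneg fun ω _ => hX ω) (Nat.cast_nonneg _)

lemma expUnif_mono {X Y : Ω → ℝ} (h : ∀ ω, X ω ≤ Y ω) : expUnif X ≤ expUnif Y := by
  unfold expUnif
  gcongr
  exact h _

lemma expUnif_sum (s : Finset ι) (X : ι → Ω → ℝ) :
    expUnif (fun ω => ∑ j ∈ s, X j ω) = ∑ j ∈ s, expUnif (X j) := by
  unfold expUnif
  rw [Finset.sum_comm, Finset.sum_div]

end Expectation

section Independence

variable {ι : Type*} [Fintype ι] [DecidableEq ι]

lemma expUnif_univ_prod_apply {α : ι → Type*} [∀ l, Fintype (α l)] (X : ∀ l, α l → ℝ) :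
    expUnif (fun h : ∀ l, α l => ∏ l, X l (h l)) = ∏ l, expUnif (X l) := by
  simp only [expUnif, Finset.prod_div_distrib, Fintype.prod_sum, Fintype.card_pi, Nat.cast_prod]

lemma expUnif_prod_apply {α : ι → Type*} [∀ l, Fintype (α l)] [∀ l, Nonempty (α l)]
    (s : Finset ι) (X : ∀ l, α l → ℝ) :
    expUnif (fun h : ∀ l, α l => ∏ l ∈ s, X l (h l)) = ∏ l ∈ s, expUnif (X l) := by
  have factor (l : ι) : expUnif (fun x => if l ∈ s then X l x else 1) =
      if l ∈ s then expUnif (X l) else 1 := by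
    split_ifs
    · rfl
    · exact expUnif_const 1
  have h := expUnif_univ_prod_apply fun l x => if l ∈ s then X l x else 1
  simpa only [factor, Fintype.prod_ite_mem] using h

lemma expUnif_apply_mul_apply {α : ι → Type*} [∀ l, Fintype (α l)] [∀ l, Nonempty (α l)]
    {a b : ι} (hab : a ≠ b) (X : ∀ l, α l → ℝ) :
    expUnif (fun h : ∀ l, α l => X a (h a) * X b (h b)) = expUnif (X a) * expUnif (X b) := by
  simpa only [Finset.prod_pair hab] using expUnif_prod_apply {a, b} X

lemma expUnif_ite_apply_eq_apply {β : Type*} [Fintype β] [DecidableEq β] [Nonempty β] {a b : ι}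
    (hab : a ≠ b) (c : ℝ) :
    expUnif (fun g : ι → β => if g a = g b then c else 0) = c / Fintype.card β := by
  let hit (y x : β) : ℝ := if x = y then 1 else 0
  have split_by_bucket (g : ι → β) :
      (if g a = g b then c else 0) = ∑ y, c * (hit y (g a) * hit y (g b)) := by
    simp [hit, eq_comm]
  have expUnif_hit (y : β) : expUnif (hit y) = 1 / Fintype.card β := by
    simp [expUnif, hit]
  have expUnif_hit_both (y : β) :
      expUnif (fun g : ι → β => hit y (g a) * hit y (g b)) = (1 / Fintype.card β) ^ 2 := by
    rw [expUnif_apply_mul_apply hab fun _ => hit y, expUnif_hit, sq]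
  calc expUnif (fun g : ι → β => if g a = g b then c else 0)
      = ∑ y, expUnif fun g : ι → β => c * (hit y (g a) * hit y (g b)) := by
        simp only [split_by_bucket, expUnif_sum]
    _ = ∑ _y : β, c * (1 / Fintype.card β : ℝ) ^ 2 := by
        simp only [expUnif_const_mul, expUnif_hit_both]
    _ = c / Fintype.card β := by
        simp only [Finset.sum_const, Finset.card_univ, nsmul_eq_mul]
        field_simp

end Independence

section RealSqrt

lemma le_sq_sqrt (x : ℝ) : x ≤ √x ^ 2 :=
  Real.sq_sqrt' ▸ le_max_left x 0

lemma sqrt_add_le_sqrt_add_sqrt (x y : ℝ) : √(x + y) ≤ √x + √y := by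
  refine Real.sqrt_le_iff.2 ⟨by positivity, ?_⟩
  calc x + y ≤ √x ^ 2 + √y ^ 2 := add_le_add (le_sq_sqrt x) (le_sq_sqrt y)
    _ ≤ (√x + √y) ^ 2 :=
        pow_add_pow_le (Real.sqrt_nonneg x) (Real.sqrt_nonneg y) two_ne_zero

lemma sqrt_sum_le_sum_sqrt {ι : Type*} (s : Finset ι) (f : ι → ℝ) :
    √(∑ j ∈ s, f j) ≤ ∑ j ∈ s, √(f j) :=
  Finset.le_sum_of_subadditive _ Real.sqrt_zero.le sqrt_add_le_sqrt_add_sqrt s f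

lemma min_le_sqrt_mul_sqrt (x y : ℝ) : min x y ≤ √x * √y := by
  rcases le_total x y with hxy | hyx
  · calc min x y ≤ x := min_le_left x y
      _ ≤ √x ^ 2 := le_sq_sqrt x
      _ ≤ √x * √y := by rw [sq]; gcongr
  · calc min x y ≤ y := min_le_right x y
      _ ≤ √y ^ 2 := le_sq_sqrt y
      _ ≤ √x * √y := by rw [sq]; gcongr

lemma inv_sqrt_add_one_le {x : ℝ} (hx : 0 ≤ x) : (√(x + 1))⁻¹ ≤ 2 * √(x + 1) - 2 * √x := by
  have hpos : 0 < √(x + 1) := Real.sqrt_pos.2 (by positivity)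
  rw [inv_le_iff_one_le_mul₀ hpos]
  nlinarith [sq_nonneg (√(x + 1) - √x), Real.sq_sqrt hx, Real.sq_sqrt (add_nonneg hx zero_le_one)]

lemma sum_range_inv_sqrt_add_one_le (n : ℕ) :
    ∑ j ∈ Finset.range n, (√((j : ℝ) + 1))⁻¹ ≤ 2 * √n := by
  induction n with
  | zero => simp
  | succ n ih =>
    rw [Finset.sum_range_succ, Nat.cast_succ]
    linarith [inv_sqrt_add_one_le n.cast_nonneg]

end RealSqrt

section CountMin

/-- The error of a single Count-Min row with hash function `g`: the total frequency of the items
other than `i` that share the bucket of `i`. -/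
noncomputable def rowError {ι β : Type*} [Fintype ι] [DecidableEq ι] [DecidableEq β] (f : ι → ℝ)
    (i : ι) (g : ι → β) : ℝ :=
  ∑ j ∈ Finset.univ.erase i, if g j = g i then f j else 0

lemma expUnif_sqrt_rowError_le {ι β : Type*} [Fintype ι] [DecidableEq ι] [Fintype β]
    [DecidableEq β] [Nonempty β] (f : ι → ℝ) (i : ι) :
    expUnif (fun g : ι → β => √(rowError f i g)) ≤
      (∑ j ∈ Finset.univ.erase i, √(f j)) / Fintype.card β := by
  have sqrt_rowError_le (g : ι → β) :
      √(rowError f i g) ≤ ∑ j ∈ Finset.univ.erase i, if g j = g i then √(f j) else 0 := by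
    simpa only [rowError, apply_ite Real.sqrt, Real.sqrt_zero] using
      sqrt_sum_le_sum_sqrt (Finset.univ.erase i) fun j => if g j = g i then f j else 0
  calc expUnif (fun g : ι → β => √(rowError f i g))
      ≤ expUnif fun g : ι → β =>
          ∑ j ∈ Finset.univ.erase i, if g j = g i then √(f j) else 0 :=
        expUnif_mono sqrt_rowError_le
    _ = ∑ j ∈ Finset.univ.erase i,
          expUnif fun g : ι → β => if g j = g i then √(f j) else 0 :=
        expUnif_sum _ fun j (g : ι → β) => if g j = g i then √(f j) else 0
    _ = ∑ j ∈ Finset.univ.erase i, √(f j) / Fintype.card β :=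
        Finset.sum_congr rfl fun j hj =>
          expUnif_ite_apply_eq_apply (Finset.ne_of_mem_erase hj) _
    _ = (∑ j ∈ Finset.univ.erase i, √(f j)) / Fintype.card β :=
        (Finset.sum_div ..).symm

variable {n B k : ℕ}

lemma cmEst_sub_le_rowError (f : Fin n → ℝ) (h : Fin k → Fin n → Fin B) (i : Fin n) (ℓ : Fin k) :
    cmEst f h i - f i ≤ rowError f i (h ℓ) := by
  have row_eq : ∑ j, (if h ℓ j = h ℓ i then f j else 0) = f i + rowError f i (h ℓ) := by
    rw [rowError, ← Finset.add_sum_erase _ _ (Finset.mem_univ i), if_pos rfl]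
  have le_row : cmEst f h i ≤ ∑ j, if h ℓ j = h ℓ i then f j else 0 :=
    ciInf_le (Set.finite_range _).bddBelow ℓ
  linarith

theorem expUnif_cmEst_sub_le [NeZero B] (hk : 2 ≤ k) (f : Fin n → ℝ) (i : Fin n) :
    expUnif (fun h : Fin k → Fin n → Fin B => cmEst f h i - f i) ≤
      ((∑ j ∈ Finset.univ.erase i, √(f j)) / B) ^ 2 := by
  let a : Fin k := ⟨0, by omega⟩
  let b : Fin k := ⟨1, by omega⟩
  have hab : a ≠ b := by simp [a, b]
  have le_geom_mean (h : Fin k → Fin n → Fin B) :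
      cmEst f h i - f i ≤ √(rowError f i (h a)) * √(rowError f i (h b)) :=
    (le_min (cmEst_sub_le_rowError f h i a) (cmEst_sub_le_rowError f h i b)).trans
      (min_le_sqrt_mul_sqrt _ _)
  calc expUnif (fun h : Fin k → Fin n → Fin B => cmEst f h i - f i)
      ≤ expUnif fun h : Fin k → Fin n → Fin B =>
          √(rowError f i (h a)) * √(rowError f i (h b)) := expUnif_mono le_geom_mean
    _ = expUnif (fun g : Fin n → Fin B => √(rowError f i g)) ^ 2 :=
        (expUnif_apply_mul_apply hab fun _ (g : Fin n → Fin B) => √(rowError f i g)).trans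
          (sq _).symm
    _ ≤ ((∑ j ∈ Finset.univ.erase i, √(f j)) / B) ^ 2 := by
        have sqrt_le := expUnif_sqrt_rowError_le (β := Fin B) f i
        rw [Fintype.card_fin] at sqrt_le
        exact pow_le_pow_left₀ (expUnif_nonneg fun _ => Real.sqrt_nonneg _) sqrt_le 2

lemma sum_erase_sqrt_zipf_le (i : Fin n) :
    ∑ j ∈ Finset.univ.erase i, √(zipf j) ≤ 2 * √n :=
  calc ∑ j ∈ Finset.univ.erase i, √(zipf j)
      ≤ ∑ j : Fin n, √(zipf j) :=
        Finset.sum_le_univ_sum_of_nonneg fun _ => Real.sqrt_nonneg _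
    _ = ∑ j ∈ Finset.range n, (√((j : ℝ) + 1))⁻¹ := by
        simp only [zipf, Real.sqrt_inv]
        exact Fin.sum_univ_eq_sum_range (fun j : ℕ => (√((j : ℝ) + 1))⁻¹) n
    _ ≤ 2 * √n := sum_range_inv_sqrt_add_one_le n

theorem countMin_zipfian_B_eq_n_general [NeZero B] (hk : 2 ≤ k) (i : Fin n) :
    expUnif (fun h : Fin k → Fin n → Fin B => cmEst zipf h i - zipf i) ≤
      4 * n / (B : ℝ) ^ 2 :=
  calc expUnif (fun h : Fin k → Fin n → Fin B => cmEst zipf h i - zipf i)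
      ≤ ((∑ j ∈ Finset.univ.erase i, √(zipf j)) / B) ^ 2 := expUnif_cmEst_sub_le hk zipf i
    _ ≤ (2 * √n / B) ^ 2 := by
        gcongr
        exact sum_erase_sqrt_zipf_le i
    _ = 4 * n / (B : ℝ) ^ 2 := by
        rw [div_pow, mul_pow, Real.sq_sqrt n.cast_nonneg]
        norm_num

end CountMin

/-- when the number of buckets equals the number of items (`B = n`)
and `k ≥ 2`, the expected Count-Min error on Zipfian input is `O(1/n)`. -/
theorem countMin_zipfian_B_eq_n :
    ∃ C : ℝ, 0 < C ∧
      ∀ n k : ℕ, 2 ≤ k → ∀ i : Fin n,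
        expUnif (fun h : Fin k → Fin n → Fin n => cmEst zipf h i - zipf i) ≤
          C / (n : ℝ) := by
  refine ⟨4, by norm_num, fun n k hk i => ?_⟩
  have : NeZero n := i.neZero
  refine (countMin_zipfian_B_eq_n_general hk i).trans_eq ?_
  field_simp
end

section
/- Let w = (w_1,...,w_n) ∈ ℝ^n and p ∈ [0,1]. Let η_1,...,η_n be {0,1}-valued random variables with Pr[η_i = 1] = p, let σ_1,...,σ_n be {−1,1}-valued random variables with Pr[σ_i = 1] = Pr[σ_i = −1] = 1/2, and suppose all 2n random variables are mutually independent. Let S = Σ_{i=1}^n w_i·η_i·σ_i. Then for every nonempty subset I ⊆ {1,...,n}, E[|S|] ≥ (1/2)·p·(1−p)^{|I|−1}·Σ_{i∈I}|w_i|. -/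
/-- Expectation of `X(η, σ)` where `η : Fin n → Bool` are i.i.d. Bernoulli(p) variables
(`true` meaning value `1`), `σ : Fin n → Bool` are i.i.d. uniform signs
(`true` meaning `+1`, `false` meaning `-1`), and all `2n` variables are mutually
independent. -/
noncomputable def bernRadExp {n : ℕ} (p : ℝ)
    (X : (Fin n → Bool) → (Fin n → Bool) → ℝ) : ℝ :=
  ∑ η : Fin n → Bool, ∑ σ : Fin n → Bool,
    ((∏ i : Fin n, if η i then p else 1 - p) / (2 ^ n : ℝ)) * X η σ

/-!
For `i ∈ I`, consider the event that `i` is the only index of `I` with `η i = 1`. It has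
probability `p (1 - p) ^ (|I| - 1)`, and pairing each choice of signs with the one where `σ i` is
flipped shows that there the average of `|S|` over the signs is at least `|w i|`. These events are
disjoint for distinct `i ∈ I`, so the bounds add up.
-/

open Finset
open scoped BigOperators

section RademacherSum

variable {ι : Type*} [Fintype ι] [DecidableEq ι]

lemma sum_sign_smul_sub_sum_update_not {M : Type*} [AddCommGroup M] [Module ℝ M]
    (v : ι → M) (i : ι) (σ : ι → Bool) :
    (∑ j, (if σ j then (1 : ℝ) else -1) • v j) -
        ∑ j, (if Function.update σ i (!σ i) j then (1 : ℝ) else -1) • v j =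
      (if σ i then (2 : ℝ) else -2) • v i := by
  rw [← sum_sub_distrib, sum_eq_single_of_mem i (mem_univ i)]
  · rw [← sub_smul, Function.update_self]
    cases σ i <;> norm_num
  · intro j _ hji
    rw [Function.update_of_ne hji, sub_self]

lemma norm_le_expect_norm_sum_sign_smul {E : Type*} [SeminormedAddCommGroup E]
    [NormedSpace ℝ E] (v : ι → E) (i : ι) :
    ‖v i‖ ≤ 𝔼 σ : ι → Bool, ‖∑ j, (if σ j then (1 : ℝ) else -1) • v j‖ := by
  set S : (ι → Bool) → E := fun σ => ∑ j, (if σ j then (1 : ℝ) else -1) • v j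
  have flip_involutive : Function.Involutive fun σ : ι → Bool => Function.update σ i (!σ i) :=
    fun σ => by simp
  have expect_flip : 𝔼 σ, ‖S (Function.update σ i (!σ i))‖ = 𝔼 σ, ‖S σ‖ :=
    Fintype.expect_equiv flip_involutive.toPerm _ _ fun _ => rfl
  have two_mul_norm_le (σ : ι → Bool) :
      2 * ‖v i‖ ≤ ‖S σ‖ + ‖S (Function.update σ i (!σ i))‖ := calc
    2 * ‖v i‖ = ‖S σ - S (Function.update σ i (!σ i))‖ := by
      rw [sum_sign_smul_sub_sum_update_not, norm_smul]
      cases σ i <;> simp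
    _ ≤ _ := norm_sub_le _ _
  have two_mul_le : 2 * ‖v i‖ ≤ 2 * 𝔼 σ, ‖S σ‖ := calc
    2 * ‖v i‖ = 𝔼 _σ : ι → Bool, 2 * ‖v i‖ := (Fintype.expect_const _).symm
    _ ≤ 𝔼 σ, (‖S σ‖ + ‖S (Function.update σ i (!σ i))‖) :=
      expect_le_expect fun σ _ => two_mul_norm_le σ
    _ = 2 * 𝔼 σ, ‖S σ‖ := by rw [expect_add_distrib, expect_flip, two_mul]
  linarith

end RademacherSum

section SoleActive

variable {ι : Type*} [Fintype ι] [DecidableEq ι]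

/-- The event that, among the indices in `I`, exactly `i` is active. This reading presupposes
`i ∈ I`; otherwise it is the event that no index in `I` is active. -/
def soleActive (I : Finset ι) (i : ι) : Finset (ι → Bool) :=
  {η | ∀ j ∈ I, η j = decide (j = i)}

lemma apply_of_mem_soleActive {I : Finset ι} {i j : ι} {η : ι → Bool}
    (hη : η ∈ soleActive I i) (hj : j ∈ I) : η j = decide (j = i) :=
  (mem_filter.mp hη).2 j hj

lemma pairwiseDisjoint_soleActive (I : Finset ι) :
    (I : Set ι).PairwiseDisjoint (soleActive I) := by
  intro i hi k _ hik
  refine disjoint_left.mpr fun η hηi hηk => hik ?_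
  simpa using (apply_of_mem_soleActive hηi hi).symm.trans (apply_of_mem_soleActive hηk hi)

lemma sum_soleActive_mul_norm_le {E : Type*} [SeminormedAddCommGroup E] [NormedSpace ℝ E]
    {μ : (ι → Bool) → ℝ} (hμ : ∀ η, 0 ≤ μ η) (I : Finset ι) (w : ι → E) :
    ∑ i ∈ I, (∑ η ∈ soleActive I i, μ η) * ‖w i‖ ≤
      ∑ η, μ η * 𝔼 σ : ι → Bool,
        ‖∑ i, (if σ i then (1 : ℝ) else -1) • (if η i then (1 : ℝ) else 0) • w i‖ := by
  set A : (ι → Bool) → ℝ := fun η => 𝔼 σ : ι → Bool,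
    ‖∑ i, (if σ i then (1 : ℝ) else -1) • (if η i then (1 : ℝ) else 0) • w i‖
  have norm_le {i : ι} (hi : i ∈ I) {η : ι → Bool} (hη : η ∈ soleActive I i) : ‖w i‖ ≤ A η := by
    have hηi : η i = true := by simpa using apply_of_mem_soleActive hη hi
    calc ‖w i‖ = ‖(if η i then (1 : ℝ) else 0) • w i‖ := by rw [if_pos hηi, one_smul]
      _ ≤ A η :=
        norm_le_expect_norm_sum_sign_smul (fun j => (if η j then (1 : ℝ) else 0) • w j) i
  have A_nonneg (η : ι → Bool) : 0 ≤ A η := expect_nonneg fun _ _ => norm_nonneg _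
  calc ∑ i ∈ I, (∑ η ∈ soleActive I i, μ η) * ‖w i‖
      = ∑ i ∈ I, ∑ η ∈ soleActive I i, μ η * ‖w i‖ := by simp only [sum_mul]
    _ ≤ ∑ i ∈ I, ∑ η ∈ soleActive I i, μ η * A η :=
      sum_le_sum fun i hi => sum_le_sum fun η hη => mul_le_mul_of_nonneg_left (norm_le hi hη) (hμ η)
    _ = ∑ η ∈ I.biUnion (soleActive I), μ η * A η :=
      (sum_biUnion (pairwiseDisjoint_soleActive I)).symm
    _ ≤ ∑ η, μ η * A η := sum_le_univ_sum_of_nonneg fun η => mul_nonneg (hμ η) (A_nonneg η)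

end SoleActive

section BernoulliWeight

variable {ι : Type*} [Fintype ι]

/-- The probability of the outcome `η` for independent Bernoulli variables with success
probabilities `p i`, where `true` encodes the value `1`. -/
def bernoulliWeight (p : ι → ℝ) (η : ι → Bool) : ℝ :=
  ∏ i, if η i then p i else 1 - p i

lemma bernoulliWeight_nonneg {p : ι → ℝ} (hp₀ : ∀ i, 0 ≤ p i) (hp₁ : ∀ i, p i ≤ 1)
    (η : ι → Bool) : 0 ≤ bernoulliWeight p η :=
  prod_nonneg fun i _ => by
    split_ifs
    exacts [hp₀ i, sub_nonneg.mpr (hp₁ i)]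

variable [DecidableEq ι]

lemma sum_bernoulliWeight_cylinder (p : ι → ℝ) (I : Finset ι) (b : ι → Bool) :
    ∑ η : ι → Bool with ∀ j ∈ I, η j = b j, bernoulliWeight p η =
      ∏ j ∈ I, if b j then p j else 1 - p j := by
  have cylinder_eq_piFinset : ({η | ∀ j ∈ I, η j = b j} : Finset (ι → Bool)) =
      Fintype.piFinset fun j => if j ∈ I then {b j} else univ := by
    ext η
    simp only [mem_filter_univ, Fintype.mem_piFinset]
    refine forall_congr' fun j => ?_
    split_ifs with hj <;> simp [hj]
  have sum_factor (j : ι) :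
      ∑ c ∈ (if j ∈ I then {b j} else univ), (if c then p j else 1 - p j) =
        if j ∈ I then (if b j then p j else 1 - p j) else 1 := by
    split_ifs <;> simp_all
  calc ∑ η : ι → Bool with ∀ j ∈ I, η j = b j, bernoulliWeight p η
      = ∏ j, ∑ c ∈ (if j ∈ I then {b j} else univ), (if c then p j else 1 - p j) := by
        rw [cylinder_eq_piFinset]
        exact (prod_univ_sum _ fun j (c : Bool) => if c then p j else 1 - p j).symm
    _ = ∏ j ∈ I, if b j then p j else 1 - p j := by
        simp only [sum_factor, prod_ite_mem, univ_inter]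

lemma sum_soleActive_bernoulliWeight (p : ι → ℝ) {I : Finset ι} {i : ι} (hi : i ∈ I) :
    ∑ η ∈ soleActive I i, bernoulliWeight p η = p i * ∏ j ∈ I.erase i, (1 - p j) := by
  rw [soleActive, sum_bernoulliWeight_cylinder, ← mul_prod_erase I _ hi]
  congr 1
  · simp
  · exact prod_congr rfl fun j hj => by simp [ne_of_mem_erase hj]

end BernoulliWeight

lemma bernRadExp_eq_sum_bernoulliWeight_mul_expect {n : ℕ} (p : ℝ)
    (X : (Fin n → Bool) → (Fin n → Bool) → ℝ) :
    bernRadExp p X = ∑ η, bernoulliWeight (fun _ => p) η * 𝔼 σ, X η σ := by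
  refine sum_congr rfl fun η _ => ?_
  rw [← mul_sum, Fintype.expect_eq_sum_div_card, bernoulliWeight]
  simp [div_mul_eq_mul_div, mul_div_assoc]

theorem exp_abs_signed_bernoulli_sum_ge_general {ι E : Type*} [Fintype ι] [DecidableEq ι]
    [SeminormedAddCommGroup E] [NormedSpace ℝ E] (w : ι → E) {p : ι → ℝ}
    (hp₀ : ∀ i, 0 ≤ p i) (hp₁ : ∀ i, p i ≤ 1) (I : Finset ι) :
    ∑ i ∈ I, (p i * ∏ j ∈ I.erase i, (1 - p j)) * ‖w i‖ ≤
      ∑ η, bernoulliWeight p η * 𝔼 σ : ι → Bool,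
        ‖∑ i, (if σ i then (1 : ℝ) else -1) • (if η i then (1 : ℝ) else 0) • w i‖ := by
  refine le_of_eq_of_le (sum_congr rfl fun i hi => ?_)
    (sum_soleActive_mul_norm_le (bernoulliWeight_nonneg hp₀ hp₁) I w)
  rw [sum_soleActive_bernoulliWeight p hi]

/-- for `S = Σ w_i η_i σ_i` with independent Bernoulli(p) `η_i` and
Rademacher `σ_i`, for every nonempty `I ⊆ [n]`,
`E[|S|] ≥ (1/2)·p·(1-p)^{|I|-1}·Σ_{i∈I}|w_i|`. -/
theorem exp_abs_signed_bernoulli_sum_ge :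
    ∀ (n : ℕ) (w : Fin n → ℝ) (p : ℝ), 0 ≤ p → p ≤ 1 →
      ∀ I : Finset (Fin n), I.Nonempty →
        (1 / 2) * p * (1 - p) ^ (I.card - 1) * (∑ i ∈ I, |w i|) ≤
          bernRadExp p (fun η σ =>
            |∑ i : Fin n, w i * (if η i then (1 : ℝ) else 0) *
              (if σ i then (1 : ℝ) else -1)|) := by
  intro n w p hp₀ hp₁ I _
  have lower_nonneg : 0 ≤ p * (1 - p) ^ (#I - 1) * ∑ i ∈ I, |w i| :=
    mul_nonneg (mul_nonneg hp₀ (pow_nonneg (sub_nonneg.mpr hp₁) _))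
      (sum_nonneg fun i _ => abs_nonneg (w i))
  calc 1 / 2 * p * (1 - p) ^ (#I - 1) * ∑ i ∈ I, |w i|
      ≤ p * (1 - p) ^ (#I - 1) * ∑ i ∈ I, |w i| := by linarith
    _ = ∑ i ∈ I, (p * ∏ _j ∈ I.erase i, (1 - p)) * ‖w i‖ := by
        rw [mul_sum]
        exact sum_congr rfl fun i hi => by
          rw [prod_const, card_erase_of_mem hi, Real.norm_eq_abs]
    _ ≤ _ := exp_abs_signed_bernoulli_sum_ge_general w (fun _ => hp₀) (fun _ => hp₁) I
    _ = _ := by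
        simp only [bernRadExp_eq_sum_bernoulliWeight_mul_expect, smul_eq_mul, Real.norm_eq_abs,
          mul_comm]
end

section
/- There exist absolute constants c, C > 0 such that the following holds. For all n, B ∈ ℕ with 2 ≤ B ≤ n, for truly random h : {1,...,n} → {1,...,B} and s : {1,...,n} → {−1,1}, and for every i ∈ {1,...,n}, the one-row Count-Sketch estimate f̃_i = Σ_{j=1}^n 1[h(j)=h(i)]·s(j)·(1/j) satisfies c·(log B)/B ≤ E[|f̃_i − s(i)·(1/i)|] ≤ C·(log B)/B. -/
/-- The sign `±1` encoded by a boolean. -/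
def sgn (b : Bool) : ℝ := if b then 1 else -1

/-- One-row Count-Sketch counter at item `i`'s bucket, for hash function `h` and
sign function `s`: `Σ_j 1[h(j)=h(i)]·s(j)·f_j`. -/
noncomputable def csRow {n B : ℕ} (f : Fin n → ℝ) (h : Fin n → Fin B)
    (s : Fin n → Bool) (i : Fin n) : ℝ :=
  ∑ j : Fin n, if h j = h i then sgn (s j) * f j else 0

/-!
Removing item `i`'s own term from its counter leaves a signed sum over the items colliding with `i`.
Each item collides with probability `1 / B`. In expectation, the first `B` items contribute
at most `(1 / B) * ∑_{j ≤ B} 1 / j` in absolute value, and by Cauchy–Schwarz the remaining items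
contribute at most `√((1 / B) * ∑_{j > B} 1 / j ^ 2) ≤ 1 / B`.

For the lower bound, fix `h`. Correlating the signed sum with one sign shows that its mean absolute
value over the signs is at least `1 / j` for every colliding `j`, hence at least the average of
`1 / j` over the `N` colliding items among the first `B`. Since `1 / N ≥ 1 - N / 4`, the average
is bounded below by a quadratic form in the collision indicators, whose expectation involves
only the probabilities that one or two given items collide with `i`.
-/

open Finset
open scoped BigOperators

section Expectation

lemma expUnif_eq_expect {Ω : Type*} [Fintype Ω] (X : Ω → ℝ) : expUnif X = 𝔼 ω, X ω :=
  (Fintype.expect_eq_sum_div_card X).symm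

lemma expect_prod_type {Ω Ω' M : Type*} [Fintype Ω] [Fintype Ω'] [AddCommMonoid M] [Module ℚ≥0 M]
    (X : Ω × Ω' → M) : 𝔼 ω, X ω = 𝔼 a, 𝔼 b, X (a, b) := by
  rw [← univ_product_univ, expect_product]

lemma expect_abs_le_sqrt_expect_sq {Ω : Type*} [Fintype Ω] [Nonempty Ω] (X : Ω → ℝ) :
    𝔼 ω, |X ω| ≤ √(𝔼 ω, X ω ^ 2) := by
  refine Real.le_sqrt_of_sq_le ?_
  simpa using expect_mul_sq_le_sq_mul_sq univ (fun ω ↦ |X ω|) 1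

lemma expect_prod_apply {ι K : Type*} {β : ι → Type*} [Fintype ι] [DecidableEq ι]
    [∀ i, Fintype (β i)] [∀ i, Nonempty (β i)] [Semifield K] [CharZero K]
    (T : Finset ι) (g : ∀ i, β i → K) :
    𝔼 x : ∀ i, β i, ∏ i ∈ T, g i (x i) = ∏ i ∈ T, 𝔼 b, g i b := by
  have expect_prod_univ (g : ∀ i, β i → K) :
      𝔼 x : ∀ i, β i, ∏ i, g i (x i) = ∏ i, 𝔼 b, g i b := by
    simp only [Fintype.expect_eq_sum_div_card, prod_div_distrib, prod_univ_sum,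
      Fintype.piFinset_univ, Fintype.card_pi, Nat.cast_prod]
  have expect_ite (i : ι) :
      𝔼 b, (if i ∈ T then g i b else 1) = if i ∈ T then 𝔼 b, g i b else 1 := by
    split_ifs <;> simp
  simpa only [expect_ite, prod_ite_mem, univ_inter] using
    expect_prod_univ fun i b ↦ if i ∈ T then g i b else 1

end Expectation

lemma sum_mul_mul_one_sub_sum_div_four_le {ι : Type*} {J : Finset ι} {x a : ι → ℝ} {M : ℝ}
    (hx : ∀ j ∈ J, 0 ≤ x j) (ha : ∀ j ∈ J, 0 ≤ a j) (haM : ∀ j ∈ J, a j ≤ M) (hM : 0 ≤ M) :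
    (∑ j ∈ J, x j * a j) * (1 - (∑ j ∈ J, x j) / 4) ≤ M := by
  have weighted_nonneg : 0 ≤ ∑ j ∈ J, x j * a j :=
    sum_nonneg fun j hj ↦ mul_nonneg (hx j hj) (ha j hj)
  have weighted_le : ∑ j ∈ J, x j * a j ≤ (∑ j ∈ J, x j) * M := by
    rw [sum_mul]
    exact sum_le_sum fun j hj ↦ mul_le_mul_of_nonneg_left (haM j hj) (hx j hj)
  generalize ∑ j ∈ J, x j = N at *
  rcases le_total N 4 with hN | hN
  · calc (∑ j ∈ J, x j * a j) * (1 - N / 4) ≤ N * M * (1 - N / 4) := by gcongr; linarith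
      _ = M - M * (N / 2 - 1) ^ 2 := by ring
      _ ≤ M := sub_le_self M (by positivity)
  · exact (mul_nonpos_of_nonneg_of_nonpos weighted_nonneg (by linarith)).trans hM

section RandomSigns

variable {ι : Type*} [Fintype ι] [DecidableEq ι]

lemma abs_sgn (b : Bool) : |sgn b| = 1 := by
  cases b <;> simp [sgn]

lemma expect_sgn_mul_sgn (j k : ι) :
    𝔼 s : ι → Bool, sgn (s j) * sgn (s k) = if j = k then 1 else 0 := by
  split_ifs with hjk
  · subst hjk
    simp [← abs_mul_abs_self (sgn _), abs_sgn]
  · have expect_sgn : 𝔼 b, sgn b = 0 := by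
      rw [Fintype.expect_eq_sum_div_card, Fintype.sum_bool]
      simp [sgn]
    simpa only [prod_pair hjk, expect_sgn, mul_zero] using
      expect_prod_apply (β := fun _ : ι ↦ Bool) {j, k} fun _ ↦ sgn

lemma expect_sgn_mul_sum_sgn_mul {T : Finset ι} (a : ι → ℝ) {j : ι} (hj : j ∈ T) :
    𝔼 s : ι → Bool, sgn (s j) * ∑ k ∈ T, sgn (s k) * a k = a j := by
  simp_rw [mul_sum, expect_sum_comm, ← mul_assoc, ← expect_mul, expect_sgn_mul_sgn]
  simp [hj]

lemma abs_le_expect_abs_sum_sgn_mul {T : Finset ι} (a : ι → ℝ) {j : ι} (hj : j ∈ T) :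
    |a j| ≤ 𝔼 s : ι → Bool, |∑ k ∈ T, sgn (s k) * a k| :=
  calc |a j| = |𝔼 s : ι → Bool, sgn (s j) * ∑ k ∈ T, sgn (s k) * a k| := by
        rw [expect_sgn_mul_sum_sgn_mul a hj]
    _ ≤ 𝔼 s : ι → Bool, |sgn (s j) * ∑ k ∈ T, sgn (s k) * a k| := abs_expect_le _ _
    _ = 𝔼 s : ι → Bool, |∑ k ∈ T, sgn (s k) * a k| := by simp only [abs_mul, abs_sgn, one_mul]

lemma expect_sq_sum_sgn_mul (T : Finset ι) (a : ι → ℝ) :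
    𝔼 s : ι → Bool, (∑ k ∈ T, sgn (s k) * a k) ^ 2 = ∑ k ∈ T, a k ^ 2 := by
  have expand (s : ι → Bool) : (∑ k ∈ T, sgn (s k) * a k) ^ 2 =
      ∑ j ∈ T, a j * (sgn (s j) * ∑ k ∈ T, sgn (s k) * a k) := by
    rw [sq, sum_mul]
    exact sum_congr rfl fun j _ ↦ by ring
  simp_rw [expand, expect_sum_comm, ← mul_expect]
  exact sum_congr rfl fun j hj ↦ by rw [expect_sgn_mul_sum_sgn_mul a hj, sq]

end RandomSigns

section RandomHash

variable {ι β : Type*} [DecidableEq β]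

/-- The indicator `1[h(j) = h(i)]` that item `j` collides with item `i`, real-valued so that it can
serve as a weight. -/
def collision (h : ι → β) (i j : ι) : ℝ := if h j = h i then 1 else 0

lemma collision_nonneg (h : ι → β) (i j : ι) : 0 ≤ collision h i j := by
  unfold collision; positivity

lemma collision_mul_self (h : ι → β) (i j : ι) :
    collision h i j * collision h i j = collision h i j := by
  simp [collision]

variable [Fintype ι] [DecidableEq ι] [Fintype β] [Nonempty β]

lemma expect_prod_collision {i : ι} {T : Finset ι} (hi : i ∉ T) :
    𝔼 h : ι → β, ∏ j ∈ T, collision h i j = ((Fintype.card β : ℝ) ^ #T)⁻¹ := by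
  have sum_over_buckets (h : ι → β) : ∏ j ∈ T, collision h i j =
      ∑ b, ∏ j ∈ insert i T, if h j = b then (1 : ℝ) else 0 := by
    simp [prod_insert hi, collision]
  have expect_bucket (b : β) :
      𝔼 h : ι → β, ∏ j ∈ insert i T, (if h j = b then (1 : ℝ) else 0) =
        ((Fintype.card β : ℝ) ^ (#T + 1))⁻¹ := by
    rw [expect_prod_apply (insert i T) fun _ x ↦ if x = b then (1 : ℝ) else 0]
    simp [card_insert_of_notMem hi]
  simp_rw [sum_over_buckets, expect_sum_comm, expect_bucket]
  rw [sum_const, card_univ, nsmul_eq_mul, pow_succ]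
  field_simp

lemma expect_collision {i j : ι} (hj : j ≠ i) :
    𝔼 h : ι → β, collision h i j = (Fintype.card β : ℝ)⁻¹ := by
  simpa using expect_prod_collision (β := β) (i := i) (T := {j}) (by simpa using hj.symm)

lemma expect_collision_mul_collision {i j k : ι} (hj : j ≠ i) (hk : k ≠ i) (hjk : j ≠ k) :
    𝔼 h : ι → β, collision h i j * collision h i k = ((Fintype.card β : ℝ) ^ 2)⁻¹ := by
  simpa [prod_pair hjk, card_pair hjk] using
    expect_prod_collision (β := β) (i := i) (T := {j, k}) (by simp [hj.symm, hk.symm])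

lemma expect_sum_collision_mul {i : ι} {T : Finset ι} (hi : i ∉ T) (a : ι → ℝ) :
    𝔼 h : ι → β, ∑ j ∈ T, collision h i j * a j = (∑ j ∈ T, a j) / Fintype.card β := by
  simp_rw [expect_sum_comm, ← expect_mul, div_eq_inv_mul, mul_sum]
  exact sum_congr rfl fun j hj ↦ by rw [expect_collision (ne_of_mem_of_not_mem hj hi)]

lemma expect_collision_mul_sum_collision_le {i j : ι} {J : Finset ι} (hi : i ∉ J) (hj : j ∈ J) :
    𝔼 h : ι → β, collision h i j * ∑ k ∈ J, collision h i k ≤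
      (1 + #J / Fintype.card β) / Fintype.card β := by
  have hji : j ≠ i := ne_of_mem_of_not_mem hj hi
  have expect_le (k : ι) (hk : k ∈ J) : 𝔼 h : ι → β, collision h i j * collision h i k ≤
      (if j = k then (Fintype.card β : ℝ)⁻¹ else 0) + ((Fintype.card β : ℝ) ^ 2)⁻¹ := by
    split_ifs with hjk
    · subst hjk
      simp_rw [collision_mul_self, expect_collision hji]
      exact le_add_of_nonneg_right (by positivity)
    · rw [expect_collision_mul_collision hji (ne_of_mem_of_not_mem hk hi) hjk, zero_add]
  simp_rw [mul_sum, expect_sum_comm]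
  refine (sum_le_sum expect_le).trans_eq ?_
  rw [sum_add_distrib, sum_ite_eq, if_pos hj, sum_const, nsmul_eq_mul]
  field_simp

end RandomHash

section BucketNoise

variable {ι β : Type*} [DecidableEq β]

/-- The signed contribution of the items in `T` to the counter of the bucket of item `i`. For
`T = univ.erase i` it is the Count-Sketch error of item `i`. -/
noncomputable def bucketNoise (f : ι → ℝ) (T : Finset ι) (i : ι) (h : ι → β) (s : ι → Bool) : ℝ :=
  ∑ j ∈ T, sgn (s j) * (collision h i j * f j)

lemma csRow_sub_sgn_mul_self {n B : ℕ} (f : Fin n → ℝ) (h : Fin n → Fin B) (s : Fin n → Bool)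
    (i : Fin n) :
    csRow f h s i - sgn (s i) * f i = bucketNoise f (univ.erase i) i h s := by
  have csRow_eq : csRow f h s i = ∑ j, sgn (s j) * (collision h i j * f j) :=
    sum_congr rfl fun j _ ↦ by simp [collision]
  rw [csRow_eq, bucketNoise, ← sum_erase_add _ _ (mem_univ i)]
  simp [collision]

lemma abs_bucketNoise_le (f : ι → ℝ) (T : Finset ι) (i : ι) (h : ι → β) (s : ι → Bool) :
    |bucketNoise f T i h s| ≤ ∑ j ∈ T, collision h i j * |f j| := by
  refine (abs_sum_le_sum_abs _ _).trans_eq (sum_congr rfl fun j _ ↦ ?_)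
  rw [abs_mul, abs_sgn, one_mul, abs_mul, abs_of_nonneg (collision_nonneg h i j)]

variable [Fintype ι] [DecidableEq ι]

lemma sum_collision_mul_one_sub_le_expect_abs_bucketNoise (f : ι → ℝ) {J T : Finset ι}
    (hJT : J ⊆ T) (i : ι) (h : ι → β) :
    (∑ j ∈ J, collision h i j * |f j|) * (1 - (∑ j ∈ J, collision h i j) / 4) ≤
      𝔼 s : ι → Bool, |bucketNoise f T i h s| := by
  have abs_mul_abs (j : ι) :
      collision h i j * |collision h i j * f j| = collision h i j * |f j| := by
    rw [abs_mul, abs_of_nonneg (collision_nonneg h i j), ← mul_assoc, collision_mul_self]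
  simp_rw [← abs_mul_abs]
  exact sum_mul_mul_one_sub_sum_div_four_le (fun j _ ↦ collision_nonneg h i j)
    (fun j _ ↦ abs_nonneg _)
    (fun j hj ↦ abs_le_expect_abs_sum_sgn_mul (fun j ↦ collision h i j * f j) (hJT hj))
    (expect_nonneg fun s _ ↦ abs_nonneg _)

variable [Fintype β] [Nonempty β]

lemma expect_abs_bucketNoise_le (f : ι → ℝ) {T : Finset ι} {i : ι} (hi : i ∉ T) :
    𝔼 ω : (ι → β) × (ι → Bool), |bucketNoise f T i ω.1 ω.2| ≤
      (∑ j ∈ T, |f j|) / Fintype.card β := by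
  rw [expect_prod_type, ← expect_sum_collision_mul hi]
  exact expect_le_expect fun h _ ↦
    expect_le univ_nonempty fun s _ ↦ abs_bucketNoise_le f T i h s

lemma expect_sq_bucketNoise (f : ι → ℝ) {T : Finset ι} {i : ι} (hi : i ∉ T) :
    𝔼 ω : (ι → β) × (ι → Bool), bucketNoise f T i ω.1 ω.2 ^ 2 =
      (∑ j ∈ T, f j ^ 2) / Fintype.card β := by
  simp_rw [expect_prod_type, bucketNoise, expect_sq_sum_sgn_mul, mul_pow, sq (collision _ _ _),
    collision_mul_self, expect_sum_collision_mul hi]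

lemma expect_abs_bucketNoise_union_le (f : ι → ℝ) {J K : Finset ι} (hJK : Disjoint J K) {i : ι}
    (hiJ : i ∉ J) (hiK : i ∉ K) :
    𝔼 ω : (ι → β) × (ι → Bool), |bucketNoise f (J ∪ K) i ω.1 ω.2| ≤
      (∑ j ∈ J, |f j|) / Fintype.card β + √((∑ j ∈ K, f j ^ 2) / Fintype.card β) :=
  calc 𝔼 ω : (ι → β) × (ι → Bool), |bucketNoise f (J ∪ K) i ω.1 ω.2|
      ≤ 𝔼 ω : (ι → β) × (ι → Bool),
          (|bucketNoise f J i ω.1 ω.2| + |bucketNoise f K i ω.1 ω.2|) := by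
        refine expect_le_expect fun ω _ ↦ ?_
        rw [bucketNoise, sum_union hJK]
        exact abs_add_le _ _
    _ = 𝔼 ω : (ι → β) × (ι → Bool), |bucketNoise f J i ω.1 ω.2| +
          𝔼 ω : (ι → β) × (ι → Bool), |bucketNoise f K i ω.1 ω.2| := expect_add_distrib ..
    _ ≤ (∑ j ∈ J, |f j|) / Fintype.card β + √((∑ j ∈ K, f j ^ 2) / Fintype.card β) := by
        rw [← expect_sq_bucketNoise f hiK]
        exact add_le_add (expect_abs_bucketNoise_le f hiJ) (expect_abs_le_sqrt_expect_sq _)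

lemma le_expect_abs_bucketNoise (f : ι → ℝ) {J T : Finset ι} (hJT : J ⊆ T) {i : ι} (hi : i ∉ J)
    (hJ : #J ≤ Fintype.card β) :
    (∑ j ∈ J, |f j|) / (2 * Fintype.card β) ≤
      𝔼 ω : (ι → β) × (ι → Bool), |bucketNoise f T i ω.1 ω.2| := by
  have card_pos : (0 : ℝ) < Fintype.card β := by exact_mod_cast Fintype.card_pos
  have expect_term_ge (j : ι) (hj : j ∈ J) : (2 * Fintype.card β : ℝ)⁻¹ ≤
      𝔼 h : ι → β, (collision h i j - collision h i j * (∑ k ∈ J, collision h i k) / 4) := by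
    have second_moment := expect_collision_mul_sum_collision_le (β := β) hi hj
    have load_le_one : (#J : ℝ) / Fintype.card β ≤ 1 := by
      rw [div_le_one card_pos]; exact_mod_cast hJ
    rw [expect_sub_distrib, ← expect_div, expect_collision (ne_of_mem_of_not_mem hj hi)]
    have card_bound : (1 + #J / Fintype.card β) / Fintype.card β ≤ 2 * (Fintype.card β : ℝ)⁻¹ := by
      rw [div_eq_mul_inv]; gcongr; linarith
    rw [mul_inv]
    linarith
  calc (∑ j ∈ J, |f j|) / (2 * Fintype.card β)
      = ∑ j ∈ J, (2 * Fintype.card β : ℝ)⁻¹ * |f j| := by rw [div_eq_inv_mul, mul_sum]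
    _ ≤ ∑ j ∈ J, (𝔼 h : ι → β,
          (collision h i j - collision h i j * (∑ k ∈ J, collision h i k) / 4)) * |f j| := by
        gcongr with j hj; exact expect_term_ge j hj
    _ = 𝔼 h : ι → β,
          (∑ j ∈ J, collision h i j * |f j|) * (1 - (∑ j ∈ J, collision h i j) / 4) := by
        simp_rw [expect_mul, ← expect_sum_comm, sum_mul]
        exact expect_congr rfl fun h _ ↦ sum_congr rfl fun j _ ↦ by ring
    _ ≤ 𝔼 ω : (ι → β) × (ι → Bool), |bucketNoise f T i ω.1 ω.2| := by
        rw [expect_prod_type]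
        exact expect_le_expect fun h _ ↦
          sum_collision_mul_one_sub_le_expect_abs_bucketNoise f hJT i h

end BucketNoise

section Zipf

lemma log_div_two_le_harmonic_sub_one {B : ℕ} (hB : B ≠ 0) :
    Real.log B / 2 ≤ (harmonic B : ℝ) - 1 := by
  obtain ⟨m, rfl⟩ := Nat.exists_eq_add_one_of_ne_zero hB
  have half_harmonic_le : (harmonic m : ℝ) / 2 ≤ harmonic (m + 1) - 1 := by
    simp only [harmonic, sum_range_succ' _ m]
    push_cast
    rw [sum_div, inv_one, add_sub_cancel_right]
    refine sum_le_sum fun j _ ↦ ?_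
    rw [div_eq_mul_inv, ← mul_inv]
    exact inv_anti₀ (by positivity) (by linarith [(Nat.cast_nonneg j : (0 : ℝ) ≤ j)])
  linarith [log_add_one_le_harmonic m]

lemma harmonic_add_one_le_four_mul_log {B : ℕ} (hB : 2 ≤ B) :
    (harmonic B : ℝ) + 1 ≤ 4 * Real.log B := by
  have log_two_le : Real.log 2 ≤ Real.log B :=
    Real.log_le_log two_pos (by exact_mod_cast hB)
  linarith [harmonic_le_one_add_log B, Real.log_two_gt_d9]

lemma zipf_nonneg {n : ℕ} (i : Fin n) : 0 ≤ zipf i := by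
  unfold zipf; positivity

lemma zipf_le_one {n : ℕ} (i : Fin n) : zipf i ≤ 1 :=
  inv_le_one_of_one_le₀ (by simp)

/-- The items of rank at most `B`; those at positions `0, …, B - 1` of `Fin n`. -/
def heavyItems (n B : ℕ) : Finset (Fin n) := {j | j.val < B}

lemma card_heavyItems_le (n B : ℕ) : #(heavyItems n B) ≤ B := by
  simp [heavyItems, Fin.card_filter_val_lt]

lemma sum_zipf_heavyItems {n B : ℕ} (hBn : B ≤ n) :
    ∑ j ∈ heavyItems n B, zipf j = harmonic B := by
  have filter_lt : (range n).filter (· < B) = range B := by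
    ext j
    simp only [mem_filter, mem_range]
    omega
  simp only [heavyItems, zipf, sum_filter]
  rw [Fin.sum_univ_eq_sum_range (fun j ↦ if j < B then ((j : ℝ) + 1)⁻¹ else 0) n, ← sum_filter,
    filter_lt]
  simp [harmonic]

lemma sum_zipf_sq_compl_heavyItems_le {n B : ℕ} (hB : B ≠ 0) (hBn : B ≤ n) :
    ∑ j ∈ (heavyItems n B)ᶜ, zipf j ^ 2 ≤ (B : ℝ)⁻¹ := by
  have filter_ge : (range n).filter (¬ · < B) = Ico B n := by
    ext j
    simp only [mem_filter, mem_range, mem_Ico]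
    omega
  calc ∑ j ∈ (heavyItems n B)ᶜ, zipf j ^ 2 = ∑ j ∈ Ico B n, (((j + 1 : ℕ) : ℝ) ^ 2)⁻¹ := by
        simp only [heavyItems, compl_filter, zipf, sum_filter]
        rw [Fin.sum_univ_eq_sum_range (fun j ↦ if ¬ j < B then (((j : ℝ) + 1)⁻¹) ^ 2 else 0) n,
          ← sum_filter, filter_ge]
        simp
    _ = ∑ j ∈ Ioc B n, ((j : ℝ) ^ 2)⁻¹ := by
        rw [sum_Ico_add' (fun j : ℕ ↦ ((j : ℝ) ^ 2)⁻¹) B n 1,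
          Ico_add_one_add_one_eq_Ioc]
    _ ≤ (B : ℝ)⁻¹ - (n : ℝ)⁻¹ := sum_Ioc_inv_sq_le_sub hB hBn
    _ ≤ (B : ℝ)⁻¹ := sub_le_self _ (by positivity)

lemma log_div_two_le_sum_zipf_heavyItems_erase {n B : ℕ} (hB : B ≠ 0) (hBn : B ≤ n) (i : Fin n) :
    Real.log B / 2 ≤ ∑ j ∈ (heavyItems n B).erase i, zipf j := by
  have sum_le :
      ∑ j ∈ heavyItems n B, zipf j ≤ ∑ j ∈ (heavyItems n B).erase i, zipf j + zipf i := by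
    by_cases hi : i ∈ heavyItems n B
    · exact (sum_erase_add _ _ hi).ge
    · rw [erase_eq_of_notMem hi]
      exact le_add_of_nonneg_right (zipf_nonneg i)
  rw [sum_zipf_heavyItems hBn] at sum_le
  linarith [log_div_two_le_harmonic_sub_one hB, zipf_le_one i]

lemma log_div_le_expect_abs_bucketNoise_zipf {n B : ℕ} (hB : B ≠ 0) (hBn : B ≤ n) (i : Fin n) :
    1 / 4 * Real.log B / B ≤
      𝔼 ω : (Fin n → Fin B) × (Fin n → Bool), |bucketNoise zipf (univ.erase i) i ω.1 ω.2| := by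
  have : NeZero B := ⟨hB⟩
  have card_le : #((heavyItems n B).erase i) ≤ Fintype.card (Fin B) := by
    simpa using card_erase_le.trans (card_heavyItems_le n B)
  calc 1 / 4 * Real.log B / B = Real.log B / 2 / (2 * B) := by ring
    _ ≤ (∑ j ∈ (heavyItems n B).erase i, zipf j) / (2 * B) := by
        gcongr; exact log_div_two_le_sum_zipf_heavyItems_erase hB hBn i
    _ ≤ 𝔼 ω : (Fin n → Fin B) × (Fin n → Bool), |bucketNoise zipf (univ.erase i) i ω.1 ω.2| := by
        simpa only [abs_of_nonneg (zipf_nonneg _), Fintype.card_fin] using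
          le_expect_abs_bucketNoise zipf (erase_subset_erase i (subset_univ _))
            (notMem_erase i _) card_le

lemma expect_abs_bucketNoise_zipf_le {n B : ℕ} (hB : 2 ≤ B) (hBn : B ≤ n) (i : Fin n) :
    𝔼 ω : (Fin n → Fin B) × (Fin n → Bool), |bucketNoise zipf (univ.erase i) i ω.1 ω.2| ≤
      4 * Real.log B / B := by
  have hB0 : B ≠ 0 := by omega
  have : NeZero B := ⟨hB0⟩
  set J := (heavyItems n B).erase i
  set K := (heavyItems n B)ᶜ.erase i
  have erase_eq : univ.erase i = J ∪ K := by rw [← erase_union_distrib, union_compl]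
  have disjoint : Disjoint J K :=
    disjoint_compl_right.mono (erase_subset i _) (erase_subset i _)
  have sum_J_le : ∑ j ∈ J, zipf j ≤ harmonic B := by
    rw [← sum_zipf_heavyItems hBn]
    exact sum_le_sum_of_subset_of_nonneg (erase_subset i _) fun j _ _ ↦ zipf_nonneg j
  have sum_K_le : ∑ j ∈ K, zipf j ^ 2 ≤ (B : ℝ)⁻¹ :=
    (sum_le_sum_of_subset_of_nonneg (erase_subset i _) fun j _ _ ↦ sq_nonneg (zipf j)).trans
      (sum_zipf_sq_compl_heavyItems_le hB0 hBn)
  calc 𝔼 ω : (Fin n → Fin B) × (Fin n → Bool), |bucketNoise zipf (univ.erase i) i ω.1 ω.2|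
      ≤ (∑ j ∈ J, zipf j) / B + √((∑ j ∈ K, zipf j ^ 2) / B) := by
        rw [erase_eq]
        simpa only [abs_of_nonneg (zipf_nonneg _), Fintype.card_fin] using
          expect_abs_bucketNoise_union_le (β := Fin B) zipf disjoint (notMem_erase i _)
            (notMem_erase i _)
    _ ≤ harmonic B / B + √((B : ℝ)⁻¹ / B) := by gcongr
    _ = (harmonic B + 1) / B := by
        rw [div_eq_mul_inv (B : ℝ)⁻¹, Real.sqrt_mul_self (by positivity), add_div, one_div]
    _ ≤ 4 * Real.log B / B := by gcongr; exact harmonic_add_one_le_four_mul_log hB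

end Zipf

/-- the one-row Count-Sketch error on Zipfian input is `Θ(log B / B)`. -/
theorem countSketch_one_row_zipfian_tight :
    ∃ c C : ℝ, 0 < c ∧ 0 < C ∧
      ∀ n B : ℕ, 2 ≤ B → B ≤ n → ∀ i : Fin n,
        c * Real.log (B : ℝ) / (B : ℝ) ≤
            expUnif (fun ω : (Fin n → Fin B) × (Fin n → Bool) =>
              |csRow zipf ω.1 ω.2 i - sgn (ω.2 i) * zipf i|) ∧
        expUnif (fun ω : (Fin n → Fin B) × (Fin n → Bool) =>
              |csRow zipf ω.1 ω.2 i - sgn (ω.2 i) * zipf i|) ≤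
            C * Real.log (B : ℝ) / (B : ℝ) := by
  refine ⟨1 / 4, 4, by norm_num, by norm_num, fun n B hB hBn i ↦ ?_⟩
  simp_rw [expUnif_eq_expect, csRow_sub_sgn_mul_self]
  exact ⟨log_div_le_expect_abs_bucketNoise_zipf (by omega) hBn i,
    expect_abs_bucketNoise_zipf_le hB hBn i⟩
end

section
/- There exists an absolute constant c > 0 such that the following holds. For every odd k ≥ 3 and all n, B ∈ ℕ with n ≥ k·B and k ≤ B, for truly random hash and sign functions h_1,...,h_k : {1,...,n} → {1,...,B} and s_1,...,s_k : {1,...,n} → {−1,1}, and for every i ∈ {1,...,n}, the Count-Sketch estimate f̃_i of the Zipfian frequency f_i = 1/i satisfies E[|f̃_i − f_i|] ≥ c/(B·√k·log k). -/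
/-- The median of `k` real numbers (for odd `k` this is the usual median). -/
noncomputable def medianFin {k : ℕ} (v : Fin k → ℝ) : ℝ :=
  (List.insertionSort (· ≤ ·) (List.ofFn v)).getD (k / 2) 0

/-- The `k`-row Count-Sketch estimate of item `i`:
`median_ℓ s_ℓ(i) · Σ_j 1[h_ℓ(j)=h_ℓ(i)]·s_ℓ(j)·f_j`. -/
noncomputable def csEst {n B k : ℕ} (f : Fin n → ℝ) (h : Fin k → Fin n → Fin B)
    (s : Fin k → Fin n → Bool) (i : Fin n) : ℝ :=
  medianFin (fun ℓ : Fin k =>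
    sgn (s ℓ i) * ∑ j : Fin n, if h ℓ j = h ℓ i then sgn (s ℓ j) * f j else 0)

/-!
The error `X` of a single row is symmetric. Moving a non-colliding item `j` into the bucket of `i`
shifts `X` by `±1 / j`, and these shifts are `1 / m ^ 2` apart over the `m` heaviest items, so few
of the moves land in `[-t, t]`. Counting moves, with a hash function weighted by the inverse of its
number of collisions, gives `P(|X| ≤ t) ≲ exp (-m / B) + t m + 1 / m`.

Let `Z` of the `k` rows have error in `[-t, t]`, and let `D` be the difference between the numbers
of rows above and below this interval. The median can be within `t` of `f i` only if `|D| < Z`. For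
`m ≈ B log k` and `t ≈ 1 / (B √k log k)` we have `P(|X| ≤ t) ≲ 1 / √k`, so `Z` is at most a small
multiple of `√k` on average, while `D` is a sum of `k` symmetric signs and exceeds `√k / 2` in
absolute value with constant probability. For bounded `k` it is enough that all rows exceed
`t ≈ 1 / B` simultaneously with probability bounded below.
-/

namespace CountSketch

open Finset
open scoped BigOperators

section Uniform

variable {Ω Ω' : Type*} [Fintype Ω] [Fintype Ω']

lemma expUnif_eq_expect (X : Ω → ℝ) : expUnif X = 𝔼 ω, X ω :=
  (Fintype.expect_eq_sum_div_card X).symm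

lemma expect_prod (X : Ω × Ω' → ℝ) : 𝔼 x, X x = 𝔼 a, 𝔼 b, X (a, b) := by
  rw [← univ_product_univ, expect_product]

lemma expect_eq_zero_of_comp_eq_neg (σ : Equiv.Perm Ω) {X : Ω → ℝ} (hX : ∀ ω, X (σ ω) = -X ω) :
    𝔼 ω, X ω = 0 := by
  have h : 𝔼 ω, X ω = -𝔼 ω, X ω := by
    rw [← expect_neg_distrib]
    exact (Fintype.expect_equiv σ _ _ fun ω => (hX ω).symm).symm
  linarith

open Classical in
/-- Probability of the event `p` under the uniform distribution on a finite space, the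
counterpart of `expUnif` for events. -/
noncomputable def probUnif (p : Ω → Prop) : ℝ := 𝔼 ω, if p ω then 1 else 0

variable {p q r : Ω → Prop}

lemma probUnif_eq_expect [DecidablePred p] : probUnif p = 𝔼 ω, if p ω then 1 else 0 := by
  unfold probUnif
  congr!

lemma probUnif_nonneg : 0 ≤ probUnif p := by
  classical
  exact expect_nonneg fun ω _ => by split_ifs <;> norm_num

lemma probUnif_le_add (h : ∀ ω, p ω → q ω ∨ r ω) : probUnif p ≤ probUnif q + probUnif r := by
  classical
  simp only [probUnif, ← expect_add_distrib]
  refine expect_le_expect fun ω _ => ?_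
  have := h ω
  split_ifs <;> first | tauto | norm_num

lemma probUnif_not [Nonempty Ω] : probUnif (fun ω => ¬p ω) = 1 - probUnif p := by
  classical
  rw [eq_sub_iff_add_eq, ← Fintype.expect_one (ι := Ω) (M := ℝ)]
  simp only [probUnif, ← expect_add_distrib]
  exact expect_congr rfl fun ω _ => by split_ifs <;> simp

lemma probUnif_comp_equiv (e : Ω ≃ Ω') (p : Ω' → Prop) :
    probUnif (fun ω => p (e ω)) = probUnif p := by
  classical
  exact Fintype.expect_equiv e _ _ fun _ => rfl

lemma probUnif_prod_le [Nonempty Ω'] {p : Ω × Ω' → Prop} {c : ℝ}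
    (h : ∀ b, probUnif (fun a => p (a, b)) ≤ c) : probUnif p ≤ c := by
  classical
  rw [probUnif, expect_prod, expect_comm]
  exact expect_le univ_nonempty fun b _ => h b

lemma mul_probUnif_le_expect {X : Ω → ℝ} {c : ℝ} (hX : ∀ ω, 0 ≤ X ω) (h : ∀ ω, p ω → c ≤ X ω) :
    c * probUnif p ≤ 𝔼 ω, X ω := by
  classical
  rw [probUnif, mul_expect]
  refine expect_le_expect fun ω _ => ?_
  split_ifs with hp
  · simpa using h ω hp
  · simpa using hX ω

lemma paley_zygmund [Nonempty Ω] (Y : Ω → ℝ) {a : ℝ} (ha : 0 ≤ a)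
    (haY : a ≤ 𝔼 ω, Y ω) :
    ((𝔼 ω, Y ω) - a) ^ 2 ≤ probUnif (fun ω => a < Y ω) * 𝔼 ω, Y ω ^ 2 := by
  classical
  have htrunc : (𝔼 ω, Y ω) - a ≤ 𝔼 ω, (if a < Y ω then 1 else 0) * Y ω := by
    calc (𝔼 ω, Y ω) - a = 𝔼 ω, (Y ω - a) := by rw [expect_sub_distrib, Fintype.expect_const]
      _ ≤ _ := expect_le_expect fun ω _ => by split_ifs <;> linarith
  calc ((𝔼 ω, Y ω) - a) ^ 2 ≤ (𝔼 ω, (if a < Y ω then 1 else 0) * Y ω) ^ 2 :=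
        pow_le_pow_left₀ (sub_nonneg.2 haY) htrunc 2
    _ ≤ (𝔼 ω, (if a < Y ω then 1 else 0) ^ 2) * 𝔼 ω, Y ω ^ 2 :=
        expect_mul_sq_le_sq_mul_sq _ _ _
    _ = probUnif (fun ω => a < Y ω) * 𝔼 ω, Y ω ^ 2 := by
        simp only [ite_pow, one_pow, zero_pow two_ne_zero, probUnif_eq_expect]

end Uniform

section Rows

variable {R : Type*} [Fintype R]

lemma probUnif_forall (p : R → Prop) (k : ℕ) :
    probUnif (fun ω : Fin k → R => ∀ ℓ, p (ω ℓ)) = probUnif p ^ k := by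
  classical
  simp only [probUnif_eq_expect, expect_pow, Fintype.piFinset_univ, prod_ite_zero,
    prod_const_one, mem_univ, true_imp_iff]

lemma expect_fin_cons (k : ℕ) (F : (Fin (k + 1) → R) → ℝ) :
    𝔼 ω, F ω = 𝔼 a : R, 𝔼 ω : Fin k → R, F (Fin.cons a ω) := by
  rw [← expect_prod fun x : R × (Fin k → R) => F (Fin.cons x.1 x.2)]
  exact (Fintype.expect_equiv (Fin.consEquiv fun _ => R) _ _ fun _ => rfl).symm

variable [Nonempty R]

lemma expect_rows_sum (g : R → ℝ) (k : ℕ) :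
    𝔼 ω : Fin k → R, ∑ ℓ, g (ω ℓ) = k * 𝔼 a, g a := by
  induction k with
  | zero => simp
  | succ k ih =>
    simp only [expect_fin_cons, Fin.sum_univ_succ, Fin.cons_zero, Fin.cons_succ,
      expect_add_distrib, Fintype.expect_const, ih]
    push_cast
    ring

variable {W : R → ℝ}

lemma expect_rows_sum_sq (hW : 𝔼 a, W a = 0) (k : ℕ) :
    𝔼 ω : Fin k → R, (∑ ℓ, W (ω ℓ)) ^ 2 = k * 𝔼 a, W a ^ 2 := by
  induction k with
  | zero => simp
  | succ k ih =>
    simp only [expect_fin_cons, Fin.sum_univ_succ, Fin.cons_zero, Fin.cons_succ, add_sq,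
      expect_add_distrib, Fintype.expect_const, ← mul_expect, ← expect_mul, hW, ih]
    push_cast
    ring

lemma expect_rows_sum_pow_four (hW : 𝔼 a, W a = 0) (k : ℕ) :
    𝔼 ω : Fin k → R, (∑ ℓ, W (ω ℓ)) ^ 4 =
      k * 𝔼 a, W a ^ 4 + 3 * k * (k - 1) * (𝔼 a, W a ^ 2) ^ 2 := by
  induction k with
  | zero => simp
  | succ k ih =>
    have binomial (x y : ℝ) :
        (x + y) ^ 4 = x ^ 4 + 4 * (x ^ 3 * y) + 6 * (x ^ 2 * y ^ 2) + 4 * (x * y ^ 3) + y ^ 4 := by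
      ring
    simp only [expect_fin_cons, Fin.sum_univ_succ, Fin.cons_zero, Fin.cons_succ, binomial,
      expect_add_distrib, Fintype.expect_const, ← mul_expect, ← expect_mul,
      expect_rows_sum, expect_rows_sum_sq hW, hW, ih]
    push_cast
    ring

end Rows

section Median

variable {k : ℕ}

lemma medianFin_eq_sort (hk : 0 < k) (v : Fin k → ℝ) :
    medianFin v = v (Tuple.sort v ⟨k / 2, Nat.div_lt_self hk one_lt_two⟩) := by
  have hsort : List.insertionSort (· ≤ ·) (List.ofFn v) = List.ofFn (v ∘ Tuple.sort v) :=
    ((List.perm_insertionSort _ _).trans (Equiv.Perm.ofFn_comp_perm _ v).symm).eq_of_sortedLE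
      List.sortedLE_insertionSort (Tuple.monotone_sort v).sortedLE_ofFn
  have hlt : k / 2 < (List.ofFn (v ∘ Tuple.sort v)).length := by
    rw [List.length_ofFn]
    omega
  rw [medianFin, hsort, List.getD_eq_getElem _ _ hlt, List.getElem_ofFn, Function.comp_apply]

lemma card_lt_le_of_medianFin_le {v : Fin k → ℝ} {a : ℝ} (h : medianFin v ≤ a) :
    #{ℓ | a < v ℓ} ≤ k / 2 := by
  rcases k.eq_zero_or_pos with rfl | hk
  · simp
  rw [medianFin_eq_sort hk] at h
  let mid : Fin k := ⟨k / 2, Nat.div_lt_self hk one_lt_two⟩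
  calc #{ℓ | a < v ℓ} = #{j | a < v (Tuple.sort v j)} :=
        (card_equiv (Tuple.sort v) fun j => by simp).symm
    _ ≤ #(Ioi mid) := card_le_card fun j hj => by
        rw [mem_Ioi]
        by_contra! hle
        exact ((Tuple.monotone_sort v hle).trans h).not_gt (mem_filter.1 hj).2
    _ ≤ k / 2 := by
        rw [Fin.card_Ioi]
        change k - 1 - k / 2 ≤ k / 2
        omega

lemma card_gt_le_of_le_medianFin {v : Fin k → ℝ} {a : ℝ} (h : a ≤ medianFin v) :
    #{ℓ | v ℓ < a} ≤ k / 2 := by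
  rcases k.eq_zero_or_pos with rfl | hk
  · simp
  rw [medianFin_eq_sort hk] at h
  let mid : Fin k := ⟨k / 2, Nat.div_lt_self hk one_lt_two⟩
  calc #{ℓ | v ℓ < a} = #{j | v (Tuple.sort v j) < a} :=
        (card_equiv (Tuple.sort v) fun j => by simp).symm
    _ ≤ #(Iio mid) := card_le_card fun j hj => by
        rw [mem_Iio]
        by_contra! hle
        exact (h.trans (Tuple.monotone_sort v hle)).not_gt (mem_filter.1 hj).2
    _ = k / 2 := Fin.card_Iio mid

/-- The sign of `x` outside the dead zone `[-t, t]`, and `0` inside it, so that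
`1 - truncSign t x ^ 2` is the indicator of `|x| ≤ t`. -/
noncomputable def truncSign (t x : ℝ) : ℝ := (if t < x then 1 else 0) - if x < -t then 1 else 0

variable {t : ℝ}

lemma truncSign_sq (ht : 0 ≤ t) (x : ℝ) :
    truncSign t x ^ 2 = (if t < x then 1 else 0) + if x < -t then 1 else 0 := by
  unfold truncSign
  split_ifs <;> linarith

lemma one_sub_truncSign_sq (ht : 0 ≤ t) (x : ℝ) :
    1 - truncSign t x ^ 2 = if |x| ≤ t then 1 else 0 := by
  rw [truncSign_sq ht]
  have := abs_le (a := x) (b := t)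
  split_ifs <;> grind

lemma truncSign_neg (t x : ℝ) : truncSign t (-x) = -truncSign t x := by
  simp only [truncSign, neg_lt_neg_iff, lt_neg (a := t), neg_sub]

/-- A median within `t` of `f` leaves at most `(k - 1) / 2` rows above `f + t` and as many below
`f - t`, hence more rows in between than the imbalance of the two sides. -/
lemma lt_abs_medianFin_sub (hk : Odd k) (ht : 0 ≤ t) (f : ℝ) {x : Fin k → ℝ}
    (h : ∑ ℓ, (1 - truncSign t (x ℓ) ^ 2) ≤ |∑ ℓ, truncSign t (x ℓ)|) :
    t < |medianFin (fun ℓ => f + x ℓ) - f| := by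
  by_contra! hmed
  rw [abs_le] at hmed
  have hpos : #{ℓ | t < x ℓ} ≤ k / 2 := by
    simpa only [add_lt_add_iff_left] using
      card_lt_le_of_medianFin_le (v := fun ℓ => f + x ℓ) (a := f + t) (by linarith)
  have hneg : #{ℓ | x ℓ < -t} ≤ k / 2 := by
    simpa only [add_lt_add_iff_left] using
      card_gt_le_of_le_medianFin (v := fun ℓ => f + x ℓ) (a := f + -t) (by linarith)
  have hpos' : 2 * (#{ℓ | t < x ℓ} : ℝ) < k := by norm_cast; grind
  have hneg' : 2 * (#{ℓ | x ℓ < -t} : ℝ) < k := by norm_cast; grind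
  simp only [truncSign_sq ht] at h
  simp only [truncSign, sum_sub_distrib, sum_add_distrib, sum_boole, sum_const,
    card_univ, Fintype.card_fin, nsmul_one] at h
  rcases le_abs.1 h with h | h <;> linarith

end Median

section MedianOfRows

variable {R : Type*} [Fintype R] {X : R → ℝ} {k : ℕ} {t : ℝ}

lemma mul_probUnif_pow_le_expect_medianFin (hk : 0 < k) (f : ℝ) :
    t * probUnif (fun a => t < X a) ^ k ≤
      𝔼 ω : Fin k → R, |medianFin (fun ℓ => f + X (ω ℓ)) - f| := by
  rw [← probUnif_forall]
  refine mul_probUnif_le_expect (fun _ => abs_nonneg _) fun ω hω => ?_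
  rw [medianFin_eq_sort hk, add_sub_cancel_left]
  exact (hω _).le.trans (le_abs_self _)

variable [Nonempty R]

lemma expect_rows_sum_pow_four_le {W : R → ℝ} (hW : 𝔼 a, W a = 0) (hW1 : ∀ a, W a ^ 2 ≤ 1)
    (hk : 0 < k) : 𝔼 ω : Fin k → R, (∑ ℓ, W (ω ℓ)) ^ 4 ≤ 3 * (k : ℝ) ^ 2 := by
  have hsq : 𝔼 a, W a ^ 2 ≤ 1 := expect_le univ_nonempty fun a _ => hW1 a
  have hfour : 𝔼 a, W a ^ 4 ≤ 1 := expect_le univ_nonempty fun a _ => by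
    rw [show W a ^ 4 = (W a ^ 2) ^ 2 by ring]
    exact pow_le_one₀ (sq_nonneg _) (hW1 a)
  have hsq' : (𝔼 a, W a ^ 2) ^ 2 ≤ 1 :=
    pow_le_one₀ (expect_nonneg fun _ _ => sq_nonneg _) hsq
  have hk1 : (1 : ℝ) ≤ k := by exact_mod_cast hk
  calc 𝔼 ω : Fin k → R, (∑ ℓ, W (ω ℓ)) ^ 4
      = k * 𝔼 a, W a ^ 4 + 3 * k * (k - 1) * (𝔼 a, W a ^ 2) ^ 2 := expect_rows_sum_pow_four hW k
    _ ≤ k * 1 + 3 * k * (k - 1) * 1 := by gcongr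
    _ ≤ 3 * (k : ℝ) ^ 2 := by linarith

lemma probUnif_quarter_lt_rows_sum_sq_ge {W : R → ℝ} (hW : 𝔼 a, W a = 0)
    (hW1 : ∀ a, W a ^ 2 ≤ 1) (hvar : 15 / 16 ≤ 𝔼 a, W a ^ 2) (hk : 0 < k) :
    5 / 32 ≤ probUnif fun ω : Fin k → R => (k : ℝ) / 4 < (∑ ℓ, W (ω ℓ)) ^ 2 := by
  have hk0 : (0 : ℝ) < k := by exact_mod_cast hk
  have hmean : 15 / 16 * (k : ℝ) ≤ 𝔼 ω : Fin k → R, (∑ ℓ, W (ω ℓ)) ^ 2 := by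
    rw [expect_rows_sum_sq hW, mul_comm]
    gcongr
  have hPZ := paley_zygmund (fun ω : Fin k → R => (∑ ℓ, W (ω ℓ)) ^ 2)
    (a := k / 4) (by positivity) (by linarith)
  simp only [← pow_mul, Nat.reduceMul] at hPZ
  refine le_of_mul_le_mul_right ?_ (by positivity : 0 < 3 * (k : ℝ) ^ 2)
  calc 5 / 32 * (3 * (k : ℝ) ^ 2) ≤ (15 / 16 * k - k / 4) ^ 2 := by nlinarith
    _ ≤ ((𝔼 ω : Fin k → R, (∑ ℓ, W (ω ℓ)) ^ 2) - k / 4) ^ 2 := by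
        gcongr
        linarith
    _ ≤ _ := hPZ
    _ ≤ _ := by
        gcongr
        · exact probUnif_nonneg
        · exact expect_rows_sum_pow_four_le hW hW1 hk

/-- With `D` the imbalance between rows above `t` and below `-t` and `Z` the number of rows in
between, Paley–Zygmund makes `D ^ 2 > k / 4` likely and Markov makes `Z ≥ √k / 2` unlikely. -/
lemma probUnif_lt_abs_medianFin_sub_ge (hk : Odd k) (ht : 0 ≤ t)
    (hX : 𝔼 a, truncSign t (X a) = 0)
    (hp : probUnif (fun a => |X a| ≤ t) ≤ 1 / (16 * √k)) (f : ℝ) :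
    1 / 32 ≤ probUnif fun ω : Fin k → R => t < |medianFin (fun ℓ => f + X (ω ℓ)) - f| := by
  have hk1 : (1 : ℝ) ≤ √k := Real.one_le_sqrt.2 (by exact_mod_cast hk.pos)
  have hkk : √(k : ℝ) * √k = k := Real.mul_self_sqrt k.cast_nonneg
  let Z (a : R) : ℝ := 1 - truncSign t (X a) ^ 2
  have hZ0 (a : R) : 0 ≤ Z a := by
    simp only [Z, one_sub_truncSign_sq ht]
    split_ifs <;> norm_num
  have hZ : 𝔼 a, Z a ≤ 1 / (16 * √k) := by
    simpa only [Z, one_sub_truncSign_sq ht, ← probUnif_eq_expect] using hp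
  have hvar : 15 / 16 ≤ 𝔼 a, truncSign t (X a) ^ 2 := by
    have : 1 / (16 * √(k : ℝ)) ≤ 1 / 16 := by gcongr; linarith
    have : 𝔼 a, Z a = 1 - 𝔼 a, truncSign t (X a) ^ 2 := by
      rw [expect_sub_distrib, Fintype.expect_const]
    linarith
  have hD := probUnif_quarter_lt_rows_sum_sq_ge hX (fun a => sub_nonneg.1 (hZ0 a)) hvar hk.pos
  have hMarkov : probUnif (fun ω : Fin k → R => √k / 2 ≤ ∑ ℓ, Z (ω ℓ)) ≤ 1 / 8 := by
    refine le_of_mul_le_mul_left ?_ (by positivity : 0 < √(k : ℝ) / 2)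
    calc _ ≤ 𝔼 ω : Fin k → R, ∑ ℓ, Z (ω ℓ) :=
          mul_probUnif_le_expect (fun ω => sum_nonneg fun ℓ _ => hZ0 _) fun _ => id
      _ = k * 𝔼 a, Z a := expect_rows_sum Z k
      _ ≤ k * (1 / (16 * √k)) := by gcongr
      _ = √k / 2 * (1 / 8) := by field_simp; linarith
  have hsplit := probUnif_le_add
    (p := fun ω : Fin k → R => k / 4 < (∑ ℓ, truncSign t (X (ω ℓ))) ^ 2)
    (q := fun ω => √k / 2 ≤ ∑ ℓ, Z (ω ℓ))
    (r := fun ω => t < |medianFin (fun ℓ => f + X (ω ℓ)) - f|) fun ω hω => by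
      refine or_iff_not_imp_left.2 fun hZω => lt_abs_medianFin_sub hk ht f ?_
      refine (not_le.1 hZω).le.trans (abs_le_of_sq_le_sq' ?_ (abs_nonneg _)).2
      rw [sq_abs]
      nlinarith
  linarith

end MedianOfRows

section Hashing

variable {ι β : Type*} [DecidableEq ι]

lemma expect_update [Fintype ι] [Fintype β] [Nonempty β] (j : ι) (F : (ι → β) → ℝ) :
    𝔼 h, 𝔼 b, F (Function.update h j b) = 𝔼 h, F h := by
  have hinv : Function.Involutive fun x : (ι → β) × β => (Function.update x.1 j x.2, x.1 j) :=
    fun x => by simp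
  rw [← expect_prod fun x : (ι → β) × β => F (Function.update x.1 j x.2)]
  calc 𝔼 x : (ι → β) × β, F (Function.update x.1 j x.2) = 𝔼 x : (ι → β) × β, F x.1 :=
        Fintype.expect_equiv hinv.toPerm _ _ fun _ => rfl
    _ = 𝔼 h, F h := by simp only [expect_prod, Fintype.expect_const]

variable [DecidableEq β] {i : ι}

/-- The items of `J` hashed into the bucket of `i`. -/
def collisions (i : ι) (J : Finset ι) (h : ι → β) : Finset ι := {j ∈ J | h j = h i}

lemma card_collisions_update {J : Finset ι} {j : ι} {h : ι → β} (hi : i ∉ J) (hj : j ∈ J)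
    (hne : h j ≠ h i) :
    #(collisions i J (Function.update h j (h i))) = #(collisions i J h) + 1 := by
  have hji : i ≠ j := fun hij => hi (hij ▸ hj)
  have hinsert : collisions i J (Function.update h j (h i)) = insert j (collisions i J h) := by
    ext x
    rcases eq_or_ne x j with rfl | hx <;> simp [collisions, *]
  rw [hinsert, card_insert_of_notMem]
  simp [collisions, hne]

variable [Fintype ι]

/-- The contribution of the other items to the bucket of `i` when item `j` carries the signed
weight `w j`. -/
def noise (i : ι) (w : ι → ℝ) (h : ι → β) : ℝ := ∑ j ∈ univ.erase i, if h j = h i then w j else 0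

lemma noise_update (w : ι → ℝ) {h : ι → β} {j : ι} (hji : j ≠ i) (hne : h j ≠ h i) :
    noise i w (Function.update h j (h i)) = w j + noise i w h := by
  have hj : j ∈ univ.erase i := mem_erase.2 ⟨hji, mem_univ _⟩
  rw [noise, noise, ← add_sum_erase _ _ hj, ← add_sum_erase _ _ hj, Function.update_self,
    Function.update_of_ne hji.symm, if_pos rfl, if_neg hne, zero_add]
  congr 1
  exact sum_congr rfl fun x hx => by rw [Function.update_of_ne (ne_of_mem_erase hx)]

variable [Fintype β]

lemma card_mul_expect_ite_collide [Nonempty β] {j : ι} (hji : j ≠ i) (G : (ι → β) → ℝ) :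
    (Fintype.card β : ℝ) * 𝔼 h, (if h j = h i then G h else 0) =
      𝔼 h, G (Function.update h j (h i)) := by
  rw [← expect_update j, mul_expect]
  refine expect_congr rfl fun h _ => ?_
  simp only [Function.update_self, Function.update_of_ne hji.symm, Fintype.expect_eq_sum_div_card,
    sum_ite_eq', mem_univ, if_true]
  field_simp

/-- Moving a non-colliding item `j` into the bucket of `i`, which leaves the rest of the hash
function alone, covers each hash function with `h j = h i` by `card β - 1` others. -/
lemma card_sub_one_mul_expect_ite_collide [Nonempty β] {j : ι} (hji : j ≠ i) (G : (ι → β) → ℝ) :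
    ((Fintype.card β : ℝ) - 1) * 𝔼 h, (if h j = h i then G h else 0) =
      𝔼 h, if h j ≠ h i then G (Function.update h j (h i)) else 0 := by
  rw [sub_mul, one_mul, card_mul_expect_ite_collide hji, ← expect_sub_distrib]
  refine expect_congr rfl fun h _ => ?_
  by_cases hj : h j = h i
  · have hupd : Function.update h j (h i) = h := by rw [← hj, Function.update_eq_self]
    simp only [hupd, hj, ne_eq, not_true, if_true, if_false, sub_self]
  · simp only [hj, ne_eq, not_false_eq_true, if_true, if_false, sub_zero]

lemma probUnif_collisions_eq_empty [Nonempty β] {J : Finset ι} (hi : i ∉ J) :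
    probUnif (fun h : ι → β => collisions i J h = ∅) = (1 - 1 / (Fintype.card β : ℝ)) ^ #J := by
  simp only [probUnif_eq_expect, collisions, filter_eq_empty_iff]
  induction J using Finset.induction with
  | empty => simp
  | insert j J hj ih =>
    have hij : i ≠ j := fun h => hi (h ▸ mem_insert_self _ _)
    have hfresh (b : β) (h : ι → β) :
        (if ∀ x ∈ insert j J, ¬Function.update h j b x = Function.update h j b i then (1 : ℝ)
          else 0) = (1 - if b = h i then 1 else 0) * if ∀ x ∈ J, ¬h x = h i then 1 else 0 := by
      have hJ : (∀ x ∈ J, ¬Function.update h j b x = h i) ↔ ∀ x ∈ J, ¬h x = h i :=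
        forall₂_congr fun x hx => by rw [Function.update_of_ne (ne_of_mem_of_not_mem hx hj)]
      simp only [forall_mem_insert, Function.update_self, Function.update_of_ne hij, hJ]
      by_cases hb : b = h i <;> simp [hb]
    have hmiss (b : β) : 𝔼 b', (1 - if b' = b then (1 : ℝ) else 0) = 1 - 1 / Fintype.card β := by
      simp [expect_sub_distrib]
    rw [← expect_update j]
    simp only [hfresh, ← expect_mul, hmiss, ← mul_expect]
    rw [ih fun h => hi (mem_insert_of_mem h), card_insert_of_notMem hj, pow_succ']

/-- Each hash function with `p` and a collision is weighted equally by its colliding items,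
and undoing one of these collisions is charged to the resulting hash function. -/
lemma card_sub_one_mul_probUnif_and_collide [Nonempty β] {J : Finset ι} (hi : i ∉ J)
    (p : (ι → β) → Prop) [DecidablePred p] :
    ((Fintype.card β : ℝ) - 1) * probUnif (fun h => p h ∧ collisions i J h ≠ ∅) =
      𝔼 h, (#{j ∈ J | h j ≠ h i ∧ p (Function.update h j (h i))} : ℝ) /
        (#(collisions i J h) + 1) := by
  have hweight (h : ι → β) : (if p h ∧ collisions i J h ≠ ∅ then (1 : ℝ) else 0) =
      ∑ j ∈ J, if h j = h i then (if p h then 1 else 0) / (#(collisions i J h) : ℝ) else 0 := by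
    rw [← sum_filter, sum_const, nsmul_eq_mul, ← collisions]
    rcases eq_or_ne (collisions i J h) ∅ with hS | hS
    · simp [hS]
    · have : (#(collisions i J h) : ℝ) ≠ 0 := by simpa using hS
      by_cases hp : p h <;> simp [hp, hS]
  have hcount (h : ι → β) : (#{j ∈ J | h j ≠ h i ∧ p (Function.update h j (h i))} : ℝ) /
      (#(collisions i J h) + 1) = ∑ j ∈ J, if h j ≠ h i then
        (if p (Function.update h j (h i)) then 1 else 0) /
          (#(collisions i J (Function.update h j (h i))) : ℝ) else 0 := by
    rw [← sum_boole, sum_div]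
    refine sum_congr rfl fun j hj => ?_
    by_cases hne : h j = h i
    · simp [hne]
    · simp [hne, card_collisions_update hi hj hne]
  simp only [probUnif_eq_expect, hweight, hcount, expect_sum_comm, mul_sum]
  exact sum_congr rfl fun j hj =>
    card_sub_one_mul_expect_ite_collide (ne_of_mem_of_not_mem hj hi) _

lemma card_add_one_mul_expect_inv_collisions_le [Nonempty β] {J : Finset ι} (hi : i ∉ J) :
    ((#J : ℝ) + 1) * 𝔼 h : ι → β, 1 / ((#(collisions i J h) : ℝ) + 1) ≤ Fintype.card β := by
  have hq : (1 : ℝ) ≤ Fintype.card β := by exact_mod_cast Fintype.card_pos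
  have htransfer := card_sub_one_mul_probUnif_and_collide (β := β) hi fun _ => True
  have hmisses (h : ι → β) : (#{j ∈ J | h j ≠ h i} : ℝ) = #J - #(collisions i J h) := by
    rw [eq_sub_iff_add_eq', collisions]
    exact_mod_cast card_filter_add_card_filter_not _
  have hterm (h : ι → β) : ((#J : ℝ) - #(collisions i J h)) / (#(collisions i J h) + 1) =
      (#J + 1) * (1 / ((#(collisions i J h) : ℝ) + 1)) - 1 := by
    field_simp
    ring
  simp only [and_true, true_and, hmisses, hterm, expect_sub_distrib, Fintype.expect_const,
    ← mul_expect] at htransfer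
  have hle : probUnif (fun h : ι → β => collisions i J h ≠ ∅) ≤ 1 :=
    probUnif_not.trans_le (sub_le_self 1 probUnif_nonneg)
  nlinarith

lemma probUnif_and_collide_le {J : Finset ι} (hi : i ∉ J) (hβ : 1 < Fintype.card β)
    (p : (ι → β) → Prop) [DecidablePred p] {N : ℝ}
    (hN : ∀ h, (#{j ∈ J | h j ≠ h i ∧ p (Function.update h j (h i))} : ℝ) ≤ N) :
    probUnif (fun h => p h ∧ collisions i J h ≠ ∅) ≤
      N * Fintype.card β / ((Fintype.card β - 1) * (#J + 1)) := by
  have : Nonempty β := Fintype.card_pos_iff.1 (by omega)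
  have hq : (0 : ℝ) < Fintype.card β - 1 := sub_pos.2 (by exact_mod_cast hβ)
  have hN0 : 0 ≤ N := (Nat.cast_nonneg _).trans (hN fun _ => Classical.arbitrary β)
  rw [le_div_iff₀ (by positivity)]
  calc probUnif (fun h => p h ∧ collisions i J h ≠ ∅) * ((Fintype.card β - 1) * (#J + 1))
      = (#J + 1) * 𝔼 h, (#{j ∈ J | h j ≠ h i ∧ p (Function.update h j (h i))} : ℝ) /
        (#(collisions i J h) + 1) := by
        rw [← card_sub_one_mul_probUnif_and_collide hi]
        ring
    _ ≤ (#J + 1) * 𝔼 h : ι → β, N * (1 / ((#(collisions i J h) : ℝ) + 1)) := by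
        simp only [mul_one_div]
        gcongr
        exact hN _
    _ = N * ((#J + 1) * 𝔼 h : ι → β, 1 / ((#(collisions i J h) : ℝ) + 1)) := by
        rw [← mul_expect]
        ring
    _ ≤ N * Fintype.card β := by
        gcongr
        exact card_add_one_mul_expect_inv_collisions_le hi

lemma probUnif_abs_noise_le (hβ : 1 < Fintype.card β) {J : Finset ι} (hi : i ∉ J) (w : ι → ℝ)
    {t N : ℝ} (hN : ∀ x, (#{j ∈ J | |w j - x| ≤ t} : ℝ) ≤ N) :
    probUnif (fun h : ι → β => |noise i w h| ≤ t) ≤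
      (1 - 1 / (Fintype.card β : ℝ)) ^ #J +
        N * Fintype.card β / ((Fintype.card β - 1) * (#J + 1)) := by
  have : Nonempty β := Fintype.card_pos_iff.1 (by omega)
  rw [← probUnif_collisions_eq_empty hi]
  refine (probUnif_le_add fun h hh => ?_).trans
    (add_le_add le_rfl (probUnif_and_collide_le hi hβ (fun h => |noise i w h| ≤ t) fun h => ?_))
  · exact or_iff_not_imp_left.2 fun hS => ⟨hh, hS⟩
  · refine le_trans ?_ (hN (-noise i w h))
    gcongr with j hj
    intro ⟨hne, hsmall⟩
    rwa [noise_update w (ne_of_mem_of_not_mem hj hi) hne, ← sub_neg_eq_add] at hsmall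

end Hashing

section Zipf

variable {n m : ℕ}

lemma zipf_sub_zipf_ge {a b : Fin n} (hab : a ≤ b) (hb : (b : ℕ) < m) :
    ((b : ℝ) - a) / m ^ 2 ≤ zipf a - zipf b := by
  have hab' : (a : ℝ) ≤ b := by exact_mod_cast hab
  have hb' : (b : ℝ) + 1 ≤ m := by exact_mod_cast hb
  calc ((b : ℝ) - a) / m ^ 2 ≤ (b - a) / ((a + 1) * (b + 1)) := by
        rw [sq]
        have : (0 : ℝ) ≤ b - a := sub_nonneg.2 hab'
        gcongr
        linarith
    _ = zipf a - zipf b := by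
        unfold zipf
        field_simp
        ring

lemma card_abs_zipf_sub_le {J : Finset (Fin n)} (hJ : ∀ j ∈ J, (j : ℕ) < m) {t : ℝ} (ht : 0 ≤ t)
    (x : ℝ) : (#{j ∈ J | |zipf j - x| ≤ t} : ℝ) ≤ 2 * t * m ^ 2 + 1 := by
  rcases ({j ∈ J | |zipf j - x| ≤ t}).eq_empty_or_nonempty with hS | hS
  · rw [hS, card_empty, Nat.cast_zero]
    positivity
  set S := {j ∈ J | |zipf j - x| ≤ t}
  let a := S.min' hS
  let b := S.max' hS
  have hab : a ≤ b := S.min'_le_max' hS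
  have ha := abs_le.1 (mem_filter.1 (S.min'_mem hS)).2
  obtain ⟨hbJ, hb⟩ := mem_filter.1 (S.max'_mem hS)
  rw [abs_le] at hb
  have hbm := hJ b hbJ
  have hm : (0 : ℝ) < m := by exact_mod_cast (Nat.zero_le _).trans_lt hbm
  have hcard : (#S : ℝ) ≤ b - a + 1 := by
    have hle : #S ≤ #(Icc a b) :=
      card_le_card fun j hj => mem_Icc.2 ⟨S.min'_le j hj, S.le_max' j hj⟩
    rw [Fin.card_Icc] at hle
    have : #S + (a : ℕ) ≤ b + 1 := by have := Fin.le_def.1 hab; omega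
    have : (#S : ℝ) + a ≤ b + 1 := by exact_mod_cast this
    linarith
  have hgap := (div_le_iff₀ (by positivity)).1 ((zipf_sub_zipf_ge hab hbm).trans
    (by linarith : zipf a - zipf b ≤ 2 * t))
  linarith

lemma abs_sgn (b : Bool) : |sgn b| = 1 := by cases b <;> simp [sgn]

lemma card_abs_sgn_mul_zipf_sub_le {J : Finset (Fin n)} (hJ : ∀ j ∈ J, (j : ℕ) < m) {t : ℝ}
    (ht : 0 ≤ t) (s : Fin n → Bool) (x : ℝ) :
    (#{j ∈ J | |sgn (s j) * zipf j - x| ≤ t} : ℝ) ≤ 4 * t * m ^ 2 + 2 := by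
  have hsub : {j ∈ J | |sgn (s j) * zipf j - x| ≤ t} ⊆
      {j ∈ J | |zipf j - x| ≤ t} ∪ {j ∈ J | |zipf j - -x| ≤ t} := fun j hj => by
    obtain ⟨hj, hx⟩ := mem_filter.1 hj
    rw [mem_union, mem_filter, mem_filter]
    cases hs : s j
    · rw [hs, ← abs_neg, sgn, if_neg Bool.false_ne_true] at hx
      exact .inr ⟨hj, by convert hx using 2; ring⟩
    · rw [hs, sgn, if_pos rfl, one_mul] at hx
      exact .inl ⟨hj, hx⟩
  have hcard : (#{j ∈ J | |sgn (s j) * zipf j - x| ≤ t} : ℝ) ≤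
      #{j ∈ J | |zipf j - x| ≤ t} + #{j ∈ J | |zipf j - -x| ≤ t} := by
    exact_mod_cast (card_le_card hsub).trans (card_union_le _ _)
  linarith [card_abs_zipf_sub_le hJ ht x, card_abs_zipf_sub_le hJ ht (-x)]

/-- The items among the `m` heaviest ones other than `i`. -/
def heavyItems (i : Fin n) (m : ℕ) : Finset (Fin n) := {j ∈ univ.erase i | (j : ℕ) < m}

lemma le_card_heavyItems_add_one (i : Fin n) (hm : m ≤ n) : m ≤ #(heavyItems i m) + 1 := by
  have hcard : #{j : Fin n | (j : ℕ) < m} = m := by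
    rw [Fin.card_filter_val_lt, min_eq_right hm]
  rw [heavyItems, filter_erase]
  have := pred_card_le_card_erase (s := {j : Fin n | (j : ℕ) < m}) (a := i)
  omega

end Zipf

section RowError

variable {ι β : Type*} [Fintype ι] [DecidableEq ι] [DecidableEq β]

/-- The error of a single row of the sketch, with hash function `a.1` and sign function `a.2`,
as an estimate of `f i`. -/
def rowError (f : ι → ℝ) (i : ι) (a : (ι → β) × (ι → Bool)) : ℝ :=
  sgn (a.2 i) * noise i (fun j => sgn (a.2 j) * f j) a.1

lemma abs_rowError (f : ι → ℝ) (i : ι) (a : (ι → β) × (ι → Bool)) :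
    |rowError f i a| = |noise i (fun j => sgn (a.2 j) * f j) a.1| := by
  rw [rowError, abs_mul, abs_sgn, one_mul]

lemma sgn_mul_bucket_eq_add_rowError (f : ι → ℝ) (i : ι) (h : ι → β) (s : ι → Bool) :
    sgn (s i) * ∑ j, (if h j = h i then sgn (s j) * f j else 0) = f i + rowError f i (h, s) := by
  have hsq : sgn (s i) * sgn (s i) = 1 := by rw [← abs_mul_abs_self, abs_sgn, one_mul]
  rw [← add_sum_erase _ _ (mem_univ i), if_pos rfl, mul_add, ← mul_assoc, hsq, one_mul, rowError,
    noise]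

/-- Flipping the sign of `i` in a row, a measure-preserving involution negating the error. -/
def flipSign (i : ι) : Equiv.Perm ((ι → β) × (ι → Bool)) :=
  Equiv.prodCongrRight fun _ => Equiv.piCongrRight fun j =>
    if j = i then Equiv.boolNot else Equiv.refl Bool

lemma rowError_flipSign (f : ι → ℝ) (i : ι) (a : (ι → β) × (ι → Bool)) :
    rowError f i (flipSign i a) = -rowError f i a := by
  have hsgn (b : Bool) : sgn (!b) = -sgn b := by cases b <;> simp [sgn]
  have hsame {j : ι} (hj : j ≠ i) : (flipSign i a).2 j = a.2 j := by simp [flipSign, hj]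
  have hflip : (flipSign i a).2 i = !a.2 i := by simp [flipSign]
  have hnoise : noise i (fun j => sgn ((flipSign i a).2 j) * f j) (flipSign i a).1 =
      noise i (fun j => sgn (a.2 j) * f j) a.1 :=
    sum_congr rfl fun j hj => by
      dsimp only
      rw [hsame (ne_of_mem_erase hj)]
      rfl
  rw [rowError, hnoise, hflip, hsgn, neg_mul, rowError]

variable [Fintype β]

lemma expect_truncSign_rowError (f : ι → ℝ) (i : ι) (t : ℝ) :
    𝔼 a : (ι → β) × (ι → Bool), truncSign t (rowError f i a) = 0 :=
  expect_eq_zero_of_comp_eq_neg (flipSign i) fun a => by rw [rowError_flipSign, truncSign_neg]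

lemma one_sub_probUnif_abs_rowError_le [Nonempty β] (f : ι → ℝ) (i : ι) (t : ℝ) :
    1 - probUnif (fun a : (ι → β) × (ι → Bool) => |rowError f i a| ≤ t) ≤
      2 * probUnif (fun a : (ι → β) × (ι → Bool) => t < rowError f i a) := by
  have hneg : probUnif (fun a : (ι → β) × (ι → Bool) => t < -rowError f i a) =
      probUnif fun a : (ι → β) × (ι → Bool) => t < rowError f i a := by
    simpa only [rowError_flipSign] using
      probUnif_comp_equiv (flipSign i) fun a : (ι → β) × (ι → Bool) => t < rowError f i a
  rw [← probUnif_not, two_mul]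
  nth_rw 2 [← hneg]
  exact probUnif_le_add fun a ha => lt_abs.1 (not_le.1 ha)

lemma expUnif_abs_csEst_sub_eq {n B k : ℕ} (f : Fin n → ℝ) (i : Fin n) :
    expUnif (fun ω : (Fin k → Fin n → Fin B) × (Fin k → Fin n → Bool) =>
      |csEst f ω.1 ω.2 i - f i|) =
    𝔼 ω : Fin k → (Fin n → Fin B) × (Fin n → Bool),
      |medianFin (fun ℓ => f i + rowError f i (ω ℓ)) - f i| := by
  rw [expUnif_eq_expect]
  refine (Fintype.expect_equiv (Equiv.arrowProdEquivProdArrow _ _ _) _ _ fun ω => ?_).symm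
  simp only [csEst, sgn_mul_bucket_eq_add_rowError]
  rfl

lemma probUnif_abs_rowError_zipf_le {n B m : ℕ} (hB : 3 ≤ B) (hm : 0 < m) (hmn : m ≤ n)
    (i : Fin n) {t : ℝ} (ht : 0 ≤ t) :
    probUnif (fun a : (Fin n → Fin B) × (Fin n → Bool) => |rowError zipf i a| ≤ t) ≤
      Real.exp (-((m - 1) / B)) + (6 * t * m + 3 / m) := by
  have hB' : (3 : ℝ) ≤ B := by exact_mod_cast hB
  have hJ : (m : ℝ) ≤ #(heavyItems i m) + 1 := by exact_mod_cast le_card_heavyItems_add_one i hmn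
  have hmem {j : Fin n} (hj : j ∈ heavyItems i m) : j ≠ i ∧ (j : ℕ) < m := by
    simpa [heavyItems] using hj
  refine probUnif_prod_le fun s => ?_
  simp only [abs_rowError]
  have hnoise := probUnif_abs_noise_le (β := Fin B) (J := heavyItems i m)
    (by rw [Fintype.card_fin]; omega) (fun hi => (hmem hi).1 rfl) _
    (card_abs_sgn_mul_zipf_sub_le (fun j hj => (hmem hj).2) ht s)
  rw [Fintype.card_fin] at hnoise
  refine hnoise.trans (add_le_add ?_ ?_)
  · calc (1 - 1 / (B : ℝ)) ^ #(heavyItems i m) ≤ Real.exp (-(1 / B)) ^ #(heavyItems i m) := by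
          gcongr
          · rw [sub_nonneg, div_le_one (by linarith)]
            linarith
          · exact Real.one_sub_le_exp_neg _
      _ = Real.exp (-(#(heavyItems i m) / B)) := by
          rw [← Real.exp_nat_mul]
          ring_nf
      _ ≤ Real.exp (-((m - 1) / B)) := by
          gcongr
          linarith
  · calc (4 * t * m ^ 2 + 2) * B / ((B - 1) * (#(heavyItems i m) + 1))
        ≤ (4 * t * m ^ 2 + 2) * B / ((2 / 3 * B) * m) := by
          gcongr <;> linarith
      _ = 6 * t * m + 3 / m := by
          field_simp
          ring

end RowError

section Zipfian

lemma one_lt_log {x : ℝ} (hx : 3 ≤ x) : 1 < Real.log x :=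
  (Real.lt_log_iff_exp_lt (by linarith)).2 (Real.exp_one_lt_three.trans_le hx)

lemma exp_neg_mul_sub_one_div_le {x b l : ℝ} (hx : 0 < x) (hb : 1 ≤ b) (hl : Real.log x ≤ l) :
    Real.exp (-((b * l - 1) / b)) ≤ 3 / x := by
  calc Real.exp (-((b * l - 1) / b)) ≤ Real.exp (1 - Real.log x) := by
        gcongr
        rw [neg_le, neg_sub, le_div_iff₀ (by linarith)]
        nlinarith
    _ = Real.exp 1 / x := by rw [Real.exp_sub, Real.exp_log hx]
    _ ≤ 3 / x := by
        gcongr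
        exact Real.exp_one_lt_three.le

variable {n B k : ℕ}

lemma probUnif_lt_rowError_zipf_ge (hB : 3 ≤ B) (hn : 2 * B ≤ n) (i : Fin n) :
    1 / 40 ≤ probUnif fun a : (Fin n → Fin B) × (Fin n → Bool) =>
      1 / (240 * B) < rowError zipf i a := by
  have : NeZero B := ⟨by omega⟩
  have hB' : (3 : ℝ) ≤ B := by exact_mod_cast hB
  have hsmall := probUnif_abs_rowError_zipf_le hB (by omega) hn i
    (by positivity : (0 : ℝ) ≤ 1 / (240 * B))
  have hsymm := one_sub_probUnif_abs_rowError_le (β := Fin B) zipf i (1 / (240 * B))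
  push_cast at hsmall
  have hexp : Real.exp (-((2 * B - 1) / B)) ≤ 3 / 8 := by
    calc Real.exp (-((2 * B - 1) / B)) ≤ Real.exp (-1) := by
          gcongr
          rw [le_div_iff₀ (by linarith)]
          linarith
      _ ≤ 3 / 8 := by linarith [Real.exp_neg_one_lt_d9]
  have hspread : 6 * (1 / (240 * B)) * (2 * B) = (1 / 20 : ℝ) := by
    field_simp
    norm_num
  have hgap : 3 / (2 * (B : ℝ)) ≤ 1 / 2 := by
    rw [div_le_iff₀ (by linarith)]
    linarith
  linarith

lemma probUnif_abs_rowError_zipf_le_of_large (hk : 40000 ≤ k) (hkB : k ≤ B)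
    (hn : B * ⌈Real.log k⌉₊ ≤ n) (i : Fin n) :
    probUnif (fun a : (Fin n → Fin B) × (Fin n → Bool) =>
      |rowError zipf i a| ≤ 1 / (384 * (B * √k * Real.log k))) ≤ 1 / (16 * √k) := by
  have hk' : (40000 : ℝ) ≤ k := by exact_mod_cast hk
  have hB' : (k : ℝ) ≤ B := by exact_mod_cast hkB
  have hB0 : (B : ℝ) ≠ 0 := by linarith
  have hsqrt : 200 ≤ √(k : ℝ) := Real.le_sqrt_of_sq_le (by norm_num; linarith)
  have hlog : 1 ≤ Real.log k := (one_lt_log (by linarith)).le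
  have hceil := Nat.le_ceil (Real.log k)
  have hceil' := Nat.ceil_lt_add_one (zero_le_one.trans hlog)
  set L := ⌈Real.log k⌉₊
  have hL : 0 < L := Nat.ceil_pos.2 (by linarith)
  have hsmall := probUnif_abs_rowError_zipf_le (B := B) (by omega) (Nat.mul_pos (by omega) hL) hn i
    (by positivity : 0 ≤ 1 / (384 * (B * √k * Real.log k)))
  push_cast at hsmall
  have hexp : Real.exp (-((B * L - 1) / B)) ≤ 3 / k :=
    exp_neg_mul_sub_one_div_le (by linarith) (by linarith) hceil
  have hspread : 6 * (1 / (384 * (B * √k * Real.log k))) * (B * L) ≤ 1 / (32 * √k) := by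
    calc 6 * (1 / (384 * (B * √k * Real.log k))) * (B * L)
        ≤ 6 * (1 / (384 * (B * √k * Real.log k))) * (B * (2 * Real.log k)) := by
          gcongr
          linarith
      _ = 1 / (32 * √k) := by
          field_simp
          norm_num
  have hgap : 3 / ((B : ℝ) * L) ≤ 3 / k := by
    have : (1 : ℝ) ≤ L := by exact_mod_cast hL
    gcongr
    nlinarith
  have htail : 6 / (k : ℝ) ≤ 1 / (32 * √k) := by
    rw [div_le_div_iff₀ (by linarith) (by linarith)]
    nlinarith [Real.mul_self_sqrt (by linarith : (0 : ℝ) ≤ k)]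
  calc _ ≤ _ := hsmall
    _ ≤ 6 / k + 1 / (32 * √k) := by
        have : 6 / (k : ℝ) = 3 / k + 3 / k := by ring
        linarith
    _ ≤ 1 / (32 * √k) + 1 / (32 * √k) := by gcongr
    _ = 1 / (16 * √k) := by ring

lemma mul_pow_div_le_expUnif_abs_csEst_sub (hk : 0 < k) (hB : 3 ≤ B) (hn : 2 * B ≤ n)
    (i : Fin n) :
    1 / 240 * (1 / 40) ^ k / (B : ℝ) ≤
      expUnif fun ω : (Fin k → Fin n → Fin B) × (Fin k → Fin n → Bool) =>
        |csEst zipf ω.1 ω.2 i - zipf i| := by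
  rw [expUnif_abs_csEst_sub_eq]
  calc 1 / 240 * (1 / 40) ^ k / (B : ℝ) = 1 / (240 * B) * (1 / 40) ^ k := by ring
    _ ≤ 1 / (240 * B) * probUnif (fun a : (Fin n → Fin B) × (Fin n → Bool) =>
        1 / (240 * B) < rowError zipf i a) ^ k := by
      gcongr
      exact probUnif_lt_rowError_zipf_ge hB hn i
    _ ≤ _ := mul_probUnif_pow_le_expect_medianFin hk (zipf i)

lemma div_le_expUnif_abs_csEst_sub_of_large (hodd : Odd k) (hk : 40000 ≤ k) (hkB : k ≤ B)
    (hn : B * ⌈Real.log k⌉₊ ≤ n) (i : Fin n) :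
    1 / 12288 / (B * √k * Real.log k) ≤
      expUnif fun ω : (Fin k → Fin n → Fin B) × (Fin k → Fin n → Bool) =>
        |csEst zipf ω.1 ω.2 i - zipf i| := by
  have : NeZero B := ⟨by omega⟩
  have ht : 0 ≤ 1 / (384 * (B * √k * Real.log k)) := by positivity
  rw [expUnif_abs_csEst_sub_eq]
  calc 1 / 12288 / (B * √k * Real.log k) = 1 / (384 * (B * √k * Real.log k)) * (1 / 32) := by
        ring
    _ ≤ _ := by
        gcongr
        exact probUnif_lt_abs_medianFin_sub_ge hodd ht (expect_truncSign_rowError zipf i _)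
          (probUnif_abs_rowError_zipf_le_of_large hk hkB hn i) (zipf i)
    _ ≤ _ := mul_probUnif_le_expect (fun _ => abs_nonneg _) fun _ => le_of_lt

end Zipfian

end CountSketch

open CountSketch in
/-- Only the `B * ⌈log k⌉` heaviest items matter. -/
theorem countSketch_multi_row_zipfian_lower_general :
    ∃ c : ℝ, 0 < c ∧
      ∀ k n B : ℕ, Odd k → 3 ≤ k → B * ⌈Real.log k⌉₊ ≤ n → k ≤ B → ∀ i : Fin n,
        c / ((B : ℝ) * Real.sqrt (k : ℝ) * Real.log (k : ℝ)) ≤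
          expUnif (fun ω : (Fin k → Fin n → Fin B) × (Fin k → Fin n → Bool) =>
            |csEst zipf ω.1 ω.2 i - zipf i|) := by
  refine ⟨min (1 / 12288) (1 / 240 * (1 / 40) ^ 40000), by positivity, ?_⟩
  intro k n B hodd hk hn hkB i
  have hk' : (3 : ℝ) ≤ k := by exact_mod_cast hk
  have hlog : 1 < Real.log k := one_lt_log hk'
  have hB : (0 : ℝ) < B := by exact_mod_cast (show 0 < B by omega)
  rcases le_total 40000 k with hlarge | hsmall
  · refine le_trans ?_ (div_le_expUnif_abs_csEst_sub_of_large hodd hlarge hkB hn i)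
    gcongr
    exact min_le_left _ _
  · have hceil : 2 ≤ ⌈Real.log k⌉₊ := Nat.lt_ceil.2 (by exact_mod_cast hlog)
    have hn' : 2 * B ≤ n := by nlinarith
    refine le_trans ?_ (mul_pow_div_le_expUnif_abs_csEst_sub (by omega) (by omega) hn' i)
    have hone : (B : ℝ) ≤ B * √k * Real.log k := by
      rw [mul_assoc]
      exact le_mul_of_one_le_right hB.le
        (one_le_mul_of_one_le_of_one_le (Real.one_le_sqrt.2 (by linarith)) hlog.le)
    gcongr ?_ / ?_
    exact (min_le_right _ _).trans <| mul_le_mul_of_nonneg_left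
      (pow_le_pow_of_le_one (by norm_num) (by norm_num) hsmall) (by norm_num)

/-- for odd `k ≥ 3` with `k·B ≤ n` and `k ≤ B`, the expected error
of `k`-row Count-Sketch on Zipfian input is `Ω(1/(B·√k·log k))`. -/
theorem countSketch_multi_row_zipfian_lower :
    ∃ c : ℝ, 0 < c ∧
      ∀ k n B : ℕ, Odd k → 3 ≤ k → k * B ≤ n → k ≤ B → ∀ i : Fin n,
        c / ((B : ℝ) * Real.sqrt (k : ℝ) * Real.log (k : ℝ)) ≤
          expUnif (fun ω : (Fin k → Fin n → Fin B) × (Fin k → Fin n → Bool) =>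
            |csEst zipf ω.1 ω.2 i - zipf i|) := by
  obtain ⟨c, hc, h⟩ := countSketch_multi_row_zipfian_lower_general
  exact ⟨c, hc, fun k n B hodd hk hn => h k n B hodd hk <| (mul_comm _ _).trans_le <| hn.trans' <|
    Nat.mul_le_mul_right B (Nat.ceil_le.2 (Real.log_le_self k.cast_nonneg))⟩
end
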